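/- arXiv:2012.07726 — 4 statements merged into one kernel-verified Lean document; each statement's English description precedes it below -/
import Mathlib

section
/- For each fixed integer r ≥ 3, there exist a constant c > 0 and an integer N such that for all n ≥ N, f_r(n) ≥ c · n^{r-1} · log n / log log n. In other words, f_r(n) = Ω(n^{r-1} log n / log log n). -/
/-- The edge ("window") `{v i, v (i+1), …, v (i+r-1)}` of a tight cycle. -/
def tightWindow {V : Type*} [DecidableEq V] (r : ℕ) {ℓ : ℕ} (v : ZMod ℓ → V)
    (i : ZMod ℓ) : Finset V :=
  Finset.image (fun j : Fin r => v (i + (j : ℕ))) Finset.univ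

/-- `E` contains an `r`-uniform tight cycle of length `ℓ`: distinct vertices
`v 0, …, v (ℓ-1)` all of whose `r`-windows (indices mod `ℓ`) are edges of `E`. -/
def IsTightCycleIn {V : Type*} [DecidableEq V] (r ℓ : ℕ) (E : Set (Finset V)) : Prop :=
  ∃ v : ZMod ℓ → V, Function.Injective v ∧ ∀ i : ZMod ℓ, tightWindow r v i ∈ E

/-- `E` contains an `r`-uniform tight cycle of some length `ℓ > r`. -/
def HasTightCycle {V : Type*} [DecidableEq V] (r : ℕ) (E : Set (Finset V)) : Prop :=
  ∃ ℓ : ℕ, r < ℓ ∧ IsTightCycleIn r ℓ E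

/-- `E` is tight-cycle-free. -/
def TightCycleFree {V : Type*} [DecidableEq V] (r : ℕ) (E : Set (Finset V)) : Prop :=
  ¬ HasTightCycle r E

/-- `f_r(n)`: the maximum number of edges of an `r`-uniform tight-cycle-free
hypergraph on `n` vertices. -/
noncomputable def tightCycleTuran (r n : ℕ) : ℕ :=
  sSup {m | ∃ E : Finset (Finset (Fin n)), (∀ e ∈ E, e.card = r) ∧
    TightCycleFree r (E : Set (Finset (Fin n))) ∧ E.card = m}

open Finset in
lemma heavy_colours {α J : Type} [Fintype α] [DecidableEq α] [Fintype J] [DecidableEq J]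
    (f : α → Option J) (D : ℕ) (hD : 0 < D) :
    #{j : J | D ≤ #{b : α | f b = some j}} ≤ Fintype.card α / D := by
  rw [Nat.le_div_iff_mul_le hD]
  calc #{j : J | D ≤ #{b : α | f b = some j}} * D
      ≤ ∑ j ∈ {j : J | D ≤ #{b : α | f b = some j}}, #{b : α | f b = some j} := by
        rw [← smul_eq_mul]
        apply Finset.card_nsmul_le_sum
        intro j hj
        simpa using hj
    _ ≤ ∑ j : J, #{b : α | f b = some j} :=
        Finset.sum_le_sum_of_subset (Finset.subset_univ _)
    _ = #((univ : Finset J).biUnion fun j => {b : α | f b = some j}) := by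
        rw [Finset.card_biUnion]
        intro x _ y _ hxy
        rw [Function.onFun, Finset.disjoint_left]
        intro b hb hb'
        simp only [Finset.mem_filter, Finset.mem_univ, true_and] at hb hb'
        rw [hb] at hb'
        exact hxy (Option.some.inj hb')
    _ ≤ Fintype.card α := Finset.card_le_univ _

/-- A monochromatic cycle of length `2 * L`, `2 ≤ L ≤ k`. -/
def BadCyc {α J : Type} (k : ℕ) (col : α → α → Option J) (j : J) : Prop :=
  ∃ L : ℕ, 2 ≤ L ∧ L ≤ k ∧ ∃ a b : ℤ → α,
    (∀ s t, a s = a t ↔ (L : ℤ) ∣ s - t) ∧ (∀ s t, b s = b t ↔ (L : ℤ) ∣ s - t) ∧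
    ∀ t, col (a t) (b t) = some j ∧ col (a (t + 1)) (b t) = some j

/-- Degree bounds and absence of short monochromatic cycles. -/
def ValidCol {α J : Type} [Fintype α] [DecidableEq J] (k D : ℕ)
    (col : α → α → Option J) : Prop :=
  (∀ j a, (Finset.univ.filter fun b => col a b = some j).card ≤ D) ∧
  (∀ j b, (Finset.univ.filter fun a => col a b = some j).card ≤ D) ∧
  ∀ j, ¬ BadCyc k col j

def nbrR {α J : Type} [Fintype α] [DecidableEq α] [DecidableEq J] (col : α → α → Option J) (j : J)
    (X : Finset α) : Finset α :=
  X.biUnion fun a => Finset.univ.filter fun b => col a b = some j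

def nbrL {α J : Type} [Fintype α] [DecidableEq α] [DecidableEq J] (col : α → α → Option J) (j : J)
    (Y : Finset α) : Finset α :=
  Y.biUnion fun b => Finset.univ.filter fun a => col a b = some j

def reachA {α J : Type} [Fintype α] [DecidableEq α] [DecidableEq J] (col : α → α → Option J) (j : J)
    (a : α) : ℕ → Finset α
  | 0 => {a}
  | t + 1 => nbrL col j (nbrR col j (reachA col j a t))

def reachSet {α J : Type} [Fintype α] [DecidableEq α] [DecidableEq J] (col : α → α → Option J) (j : J)
    (a : α) (k : ℕ) : Finset α :=
  (Finset.range k).biUnion fun t => nbrR col j (reachA col j a t)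

lemma card_nbrR {α J : Type} [Fintype α] [DecidableEq α] [DecidableEq J] {k D : ℕ}
    {col : α → α → Option J} (h : ValidCol k D col) (j : J) (X : Finset α) :
    (nbrR col j X).card ≤ X.card * D :=
  Finset.card_biUnion_le_card_mul _ _ _ fun a _ => h.1 j a

lemma card_nbrL {α J : Type} [Fintype α] [DecidableEq α] [DecidableEq J] {k D : ℕ}
    {col : α → α → Option J} (h : ValidCol k D col) (j : J) (X : Finset α) :
    (nbrL col j X).card ≤ X.card * D :=
  Finset.card_biUnion_le_card_mul _ _ _ fun a _ => h.2.1 j a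

lemma card_reachA {α J : Type} [Fintype α] [DecidableEq α] [DecidableEq J] {k D : ℕ}
    {col : α → α → Option J} (h : ValidCol k D col) (j : J) (a : α) (t : ℕ) :
    (reachA col j a t).card ≤ D ^ (2 * t) := by
  induction t with
  | zero => simp [reachA]
  | succ t ih =>
    calc _ ≤ (nbrR col j (reachA col j a t)).card * D := card_nbrL h j _
      _ ≤ ((reachA col j a t).card * D) * D := Nat.mul_le_mul_right _ (card_nbrR h j _)
      _ ≤ (D ^ (2 * t) * D) * D := by gcongr
      _ = D ^ (2 * (t + 1)) := by ring

lemma card_reachSet {α J : Type} [Fintype α] [DecidableEq α] [DecidableEq J] {k D : ℕ} (hD : 0 < D)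
    {col : α → α → Option J} (h : ValidCol k D col) (j : J) (a : α) :
    (reachSet col j a k).card ≤ k * D ^ (2 * k) := by
  have := Finset.card_biUnion_le_card_mul (Finset.range k)
    (fun t => nbrR col j (reachA col j a t)) (D ^ (2 * k)) (by
      intro t ht
      have ht := Finset.mem_range.1 ht
      calc _ ≤ (reachA col j a t).card * D := card_nbrR h j _
        _ ≤ D ^ (2 * t) * D := Nat.mul_le_mul_right _ (card_reachA h j a t)
        _ = D ^ (2 * t + 1) := by ring
        _ ≤ D ^ (2 * k) := Nat.pow_le_pow_right hD (by omega))
  simpa [reachSet] using this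

/-- If adding the cell `(a₀, b₀)` with colour `j` creates a bad cycle, then `b₀` was reachable. -/
lemma mem_reach_of_bad {α J : Type} [Fintype α] [DecidableEq α] [DecidableEq J] {k : ℕ}
    {col : α → α → Option J} {j i : J} (hno : ¬ BadCyc k col i) {a₀ b₀ : α}
    (hbad : BadCyc k (fun a b => if a = a₀ ∧ b = b₀ then some j else col a b) i) :
    b₀ ∈ reachSet col j a₀ k := by
  obtain ⟨L, hL2, hLk, a, b, ha, hb, hc⟩ := hbad
  have hdvd1 : ¬ ((L : ℤ) ∣ 1) := by
    intro h
    have := Int.le_of_dvd one_pos h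
    omega
  -- find a suitable orientation
  have key : ∃ a b : ℤ → α, (∀ s t, a s = a t ↔ (L : ℤ) ∣ s - t) ∧
      (∀ s t, b s = b t ↔ (L : ℤ) ∣ s - t) ∧
      (∀ t, (fun a b => if a = a₀ ∧ b = b₀ then some j else col a b) (a t) (b t) = some i ∧
        (fun a b => if a = a₀ ∧ b = b₀ then some j else col a b) (a (t + 1)) (b t) = some i) ∧
      ∃ t, a (t + 1) = a₀ ∧ b t = b₀ := by
    by_cases h2 : ∃ t, a (t + 1) = a₀ ∧ b t = b₀
    · exact ⟨a, b, ha, hb, hc, h2⟩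
    by_cases h1 : ∃ t, a t = a₀ ∧ b t = b₀
    · obtain ⟨t, h1a, h1b⟩ := h1
      refine ⟨fun s => a (-s), fun s => b (-s - 1), ?_, ?_, ?_, -t - 1, ?_, ?_⟩
      · intro s t
        rw [ha, ← dvd_neg]
        ring_nf
      · intro s t
        rw [hb, ← dvd_neg]
        ring_nf
      · intro s
        refine ⟨?_, ?_⟩
        · have := (hc (-s - 1)).2
          simpa using this
        · have := (hc (-s - 1)).1
          have e : -(s + 1) = -s - 1 := by ring
          simpa only [e] using this
      · simpa using h1a
      · simpa using h1b
    · exfalso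
      apply hno
      refine ⟨L, hL2, hLk, a, b, ha, hb, fun t => ⟨?_, ?_⟩⟩
      · have := (hc t).1
        simp only at this
        rwa [if_neg (fun h => h1 ⟨t, h⟩)] at this
      · have := (hc t).2
        simp only at this
        rwa [if_neg (fun h => h2 ⟨t, h⟩)] at this
  clear hc ha hb a b
  obtain ⟨a, b, ha, hb, hc, t, hta, htb⟩ := key
  have hij : j = i := by
    have := (hc t).2
    simp only [hta, htb, and_self, if_true] at this
    exact Option.some.inj this
  subst hij
  have e1 : ∀ s, col (a s) (b s) = some j := by
    intro s
    have := (hc s).1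
    simp only at this
    rwa [if_neg] at this
    rintro ⟨h1, h2⟩
    rw [← hta, ha] at h1
    rw [← htb, hb] at h2
    apply hdvd1
    have := dvd_sub h2 h1
    ring_nf at this
    exact this
  have e2 : ∀ s : ℕ, s + 1 < L → col (a (t + 1 + s + 1)) (b (t + 1 + s)) = some j := by
    intro s hs
    have := (hc (t + 1 + s)).2
    simp only at this
    rwa [if_neg] at this
    rintro ⟨h1, h2⟩
    rw [← htb, hb] at h2
    have e : t + 1 + (s : ℤ) - t = ((s + 1 : ℕ) : ℤ) := by push_cast; ring
    rw [e, Int.natCast_dvd_natCast] at h2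
    have := Nat.le_of_dvd (by omega) h2
    omega
  have e3 : ∀ s : ℕ, s < L → a (t + 1 + s) ∈ reachA col j a₀ s := by
    intro s
    induction s with
    | zero => intro _; simp [reachA, hta]
    | succ s ih =>
      intro hs
      have ih := ih (by omega)
      have hb' : b (t + 1 + s) ∈ nbrR col j (reachA col j a₀ s) := by
        simp only [nbrR, Finset.mem_biUnion, Finset.mem_filter, Finset.mem_univ, true_and]
        exact ⟨_, ih, e1 _⟩
      simp only [reachA]
      simp only [nbrL, Finset.mem_biUnion, Finset.mem_filter, Finset.mem_univ, true_and]
      refine ⟨_, hb', ?_⟩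
      have := e2 s hs
      push_cast
      rw [← add_assoc]
      exact this
  simp only [reachSet, Finset.mem_biUnion, Finset.mem_range]
  refine ⟨L - 1, by omega, ?_⟩
  simp only [nbrR, Finset.mem_biUnion, Finset.mem_filter, Finset.mem_univ, true_and]
  refine ⟨_, e3 (L - 1) (by omega), ?_⟩
  have : b₀ = b (t + 1 + (L - 1 : ℕ)) := by
    rw [← htb, hb]
    have e : t - (t + 1 + ((L - 1 : ℕ) : ℤ)) = - (L : ℤ) := by
      rw [Nat.cast_sub (by omega)]; push_cast; ring
    rw [e]
    simp
  rw [this]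
  exact e1 _

open Finset in
lemma coloring_exists {α J : Type} [Fintype α] [DecidableEq α] [Fintype J] [DecidableEq J]
    (k D : ℕ) (hD : 0 < D) (hJ : 4 * (Fintype.card α / D) ≤ Fintype.card J)
    (hJ0 : 0 < Fintype.card J)
    (hα : 4 * (k * D ^ (2 * k)) ≤ Fintype.card α) :
    ∃ col : α → α → Option J, (∀ j, ¬ BadCyc k col j) ∧
      Fintype.card α ^ 2 ≤ 2 * #{p : α × α | col p.1 p.2 ≠ none} := by
  classical
  obtain ⟨col, hcol, hmax⟩ := Finset.exists_max_image
    ({col : α → α → Option J | ValidCol k D col} : Finset (α → α → Option J))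
    (fun col => #{p : α × α | col p.1 p.2 ≠ none}) ⟨fun _ _ => none, by
      simp only [Finset.mem_filter, Finset.mem_univ, true_and]
      refine ⟨by simp, by simp, ?_⟩
      rintro j ⟨L, _, _, a, b, _, _, h⟩
      simpa using (h 0).1⟩
  have hv : ValidCol k D col := by simpa using hcol
  refine ⟨col, hv.2.2, ?_⟩
  -- every uncoloured cell is blocked in every colour
  have hblock : ∀ a b, col a b = none → ∀ j, D ≤ #{b' : α | col a b' = some j} ∨
      D ≤ #{a' : α | col a' b = some j} ∨ b ∈ reachSet col j a k := by
    intro a₀ b₀ hab j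
    by_contra! hcon
    obtain ⟨h1, h2, h3⟩ := hcon
    set col' : α → α → Option J := fun a b => if a = a₀ ∧ b = b₀ then some j else col a b with hcol'
    have hv' : ValidCol k D col' := by
      refine ⟨?_, ?_, ?_⟩
      · intro i a
        by_cases hai : a = a₀ ∧ i = j
        · obtain ⟨rfl, rfl⟩ := hai
          calc #{b | col' a b = some i} ≤ #(insert b₀ ({b' : α | col a b' = some i} : Finset α)) := by
                apply Finset.card_le_card
                intro b hb
                simp only [hcol', Finset.mem_filter, Finset.mem_univ, true_and, Finset.mem_insert] at hb ⊢
                by_cases hbb : b = b₀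
                · exact Or.inl hbb
                · right; simpa [hbb] using hb
            _ ≤ #{b' : α | col a b' = some i} + 1 := Finset.card_insert_le _ _
            _ ≤ D := h1
        · refine le_trans (Finset.card_le_card ?_) (hv.1 i a)
          intro b hb
          simp only [hcol', Finset.mem_filter, Finset.mem_univ, true_and] at hb ⊢
          by_cases hbb : a = a₀ ∧ b = b₀
          · rw [if_pos hbb] at hb
            exact absurd ⟨hbb.1, (Option.some.inj hb).symm⟩ hai
          · rwa [if_neg hbb] at hb
      · intro i b
        by_cases hai : b = b₀ ∧ i = j
        · obtain ⟨rfl, rfl⟩ := hai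
          calc #{a | col' a b = some i} ≤ #(insert a₀ ({a' : α | col a' b = some i} : Finset α)) := by
                apply Finset.card_le_card
                intro a hb
                simp only [hcol', Finset.mem_filter, Finset.mem_univ, true_and, Finset.mem_insert] at hb ⊢
                by_cases hbb : a = a₀
                · exact Or.inl hbb
                · right; simpa [hbb] using hb
            _ ≤ #{a' : α | col a' b = some i} + 1 := Finset.card_insert_le _ _
            _ ≤ D := h2
        · refine le_trans (Finset.card_le_card ?_) (hv.2.1 i b)
          intro a hb
          simp only [hcol', Finset.mem_filter, Finset.mem_univ, true_and] at hb ⊢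
          by_cases hbb : a = a₀ ∧ b = b₀
          · rw [if_pos hbb] at hb
            exact absurd ⟨hbb.2, (Option.some.inj hb).symm⟩ hai
          · rwa [if_neg hbb] at hb
      · intro i hbad
        exact h3 (mem_reach_of_bad (hv.2.2 i) hbad)
    have hle := hmax col' (by simpa using hv')
    apply absurd hle
    rw [not_le]
    apply Finset.card_lt_card
    rw [Finset.ssubset_iff_of_subset]
    · refine ⟨(a₀, b₀), ?_, ?_⟩
      · simp [hcol']
      · simp [hab]
    · intro p hp
      simp only [hcol', Finset.mem_filter, Finset.mem_univ, true_and] at hp ⊢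
      split_ifs
      · simp
      · exact hp
  -- each row has few uncoloured cells
  have hrow : ∀ a, 2 * #{b : α | col a b = none} ≤ Fintype.card α := by
    intro a
    set U : Finset α := {b : α | col a b = none} with hU
    set q := Fintype.card α / D with hq
    set m := Fintype.card J with hm
    have hb : ∀ b ∈ U, m ≤ 2 * q + #{j : J | b ∈ reachSet col j a k} := by
      intro b hbU
      have hbU : col a b = none := by simpa [hU] using hbU
      calc m = #(univ : Finset J) := rfl
        _ ≤ #((({j : J | D ≤ #{b' : α | col a b' = some j}} : Finset J) ∪
              ({j : J | D ≤ #{a' : α | col a' b = some j}} : Finset J)) ∪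
              ({j : J | b ∈ reachSet col j a k} : Finset J)) := by
            apply Finset.card_le_card
            intro j _
            simp only [Finset.mem_union, Finset.mem_filter, Finset.mem_univ, true_and]
            rcases hblock a b hbU j with h | h | h <;> simp [h]
        _ ≤ (q + q) + #{j : J | b ∈ reachSet col j a k} := by
            refine (Finset.card_union_le _ _).trans (Nat.add_le_add_right ?_ _)
            refine (Finset.card_union_le _ _).trans (Nat.add_le_add ?_ ?_)
            · exact heavy_colours (fun b' => col a b') D hD
            · exact heavy_colours (fun a' => col a' b) D hD
        _ = _ := by ring
    have hsum : #U * m ≤ #U * (2 * q) + m * (k * D ^ (2 * k)) := by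
      calc #U * m = ∑ b ∈ U, m := by simp
        _ ≤ ∑ b ∈ U, (2 * q + #{j : J | b ∈ reachSet col j a k}) := Finset.sum_le_sum hb
        _ = #U * (2 * q) + ∑ b ∈ U, #{j : J | b ∈ reachSet col j a k} := by
            rw [Finset.sum_add_distrib]; simp
        _ ≤ #U * (2 * q) + ∑ b : α, #{j : J | b ∈ reachSet col j a k} := by
            gcongr; exact Finset.subset_univ _
        _ = #U * (2 * q) + ∑ j : J, #(reachSet col j a k) := by
            congr 1
            simp only [Finset.card_filter]
            rw [Finset.sum_comm]
            apply Finset.sum_congr rfl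
            intro j _
            rw [← Finset.card_filter]
            simp
        _ ≤ #U * (2 * q) + ∑ j : J, (k * D ^ (2 * k)) := by
            gcongr with j; exact card_reachSet hD hv j a
        _ = _ := by simp [hm]
    have h2 : 2 * q * 2 ≤ m := by omega
    have h3 : m * (2 * #U) ≤ m * Fintype.card α := by
      have : #U * (2 * q * 2) ≤ #U * m := Nat.mul_le_mul_left _ h2
      have h4 : m * (4 * (k * D ^ (2 * k))) ≤ m * Fintype.card α := Nat.mul_le_mul_left _ hα
      nlinarith
    exact Nat.le_of_mul_le_mul_left h3 hJ0
  have hrow' : ∀ a, Fintype.card α ≤ 2 * #{b : α | col a b ≠ none} := by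
    intro a
    have h := Finset.card_filter_add_card_filter_not (s := (univ : Finset α)) (fun b => col a b = none)
    have h' := hrow a
    rw [Finset.card_univ] at h
    simp only [ne_eq]
    omega
  calc Fintype.card α ^ 2 = ∑ a : α, Fintype.card α := by simp [sq]
    _ ≤ ∑ a : α, 2 * #{b : α | col a b ≠ none} := Finset.sum_le_sum fun a _ => hrow' a
    _ = 2 * #{p : α × α | col p.1 p.2 ≠ none} := by
      rw [← Finset.mul_sum]
      congr 1
      simp only [Finset.card_filter]
      rw [Fintype.sum_prod_type]

/-- The transversal edge determined by `x`. -/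
def edgeOf {r : ℕ} {α : Type} [DecidableEq α] (x : Fin r → α) : Finset (Fin r × α) :=
  Finset.univ.image fun i => (i, x i)

lemma mem_edgeOf {r : ℕ} {α : Type} [DecidableEq α] (x : Fin r → α) (p : Fin r × α) :
    p ∈ edgeOf x ↔ p.2 = x p.1 := by
  obtain ⟨i, y⟩ := p
  simp [edgeOf, eq_comm]

lemma card_edgeOf {r : ℕ} {α : Type} [DecidableEq α] (x : Fin r → α) :
    (edgeOf x).card = r := by
  rw [edgeOf, Finset.card_image_of_injective]
  · simp
  · intro i j h
    exact (Prod.mk.inj h).1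

lemma edgeOf_injective {r : ℕ} {α : Type} [DecidableEq α] :
    Function.Injective (edgeOf : (Fin r → α) → Finset (Fin r × α)) := by
  intro x y h
  funext i
  have : (i, x i) ∈ edgeOf y := by rw [← h, mem_edgeOf]
  rwa [mem_edgeOf] at this

lemma free_of_coloring {α J : Type} [Fintype α] [DecidableEq α] [DecidableEq J]
    {r : ℕ} (hr : 3 ≤ r) (k : ℕ) (col : α → α → Option J) (hcol : ∀ j, ¬ BadCyc k col j)
    (g : α → J) (hg : ∀ j, (Finset.univ.filter fun c => g c = j).card ≤ k)
    (E : Set (Finset (Fin r × α)))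
    (hE : ∀ e ∈ E, ∃ x : Fin r → α,
      col (x ⟨0, by omega⟩) (x ⟨1, by omega⟩) = some (g (x ⟨2, by omega⟩)) ∧ e = edgeOf x) :
    TightCycleFree r E := by
  rintro ⟨ℓ, hℓ, v, hv, hvE⟩
  set w : ℤ → Fin r × α := fun i => v (i : ZMod ℓ) with hw
  have hweq : ∀ s t, w s = w t ↔ (ℓ : ℤ) ∣ s - t := by
    intro s t
    simp only [hw]
    rw [hv.eq_iff, eq_comm, ZMod.intCast_eq_intCast_iff_dvd_sub]
  have hwin : ∀ i : ℤ, ∃ x : Fin r → α,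
      col (x ⟨0, by omega⟩) (x ⟨1, by omega⟩) = some (g (x ⟨2, by omega⟩)) ∧
      (∀ p, i ≤ p → p < i + r → (w p).2 = x (w p).1) ∧
      (∀ y : Fin r, ∃ j : Fin r, (w (i + (j : ℕ))).1 = y) := by
    intro i
    obtain ⟨x, hx, he⟩ := hE _ (hvE (i : ZMod ℓ))
    refine ⟨x, hx, ?_, ?_⟩
    · intro p hp1 hp2
      rw [← mem_edgeOf, ← he, tightWindow, Finset.mem_image]
      refine ⟨⟨(p - i).toNat, by omega⟩, Finset.mem_univ _, ?_⟩
      simp only [hw]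
      congr 1
      have : ((p - i).toNat : ℤ) = p - i := Int.toNat_of_nonneg (by omega)
      have h2 : (((p - i).toNat : ℤ) : ZMod ℓ) = ((p - i : ℤ) : ZMod ℓ) := by rw [this]
      push_cast at h2
      rw [h2]
      ring
    · intro y
      have : (y, x y) ∈ edgeOf x := by rw [mem_edgeOf]
      rw [← he, tightWindow, Finset.mem_image] at this
      obtain ⟨j, _, hj⟩ := this
      refine ⟨j, ?_⟩
      simp only [hw]
      push_cast
      rw [hj]
  have hinj : ∀ i p q : ℤ, i ≤ p → p < i + r → i ≤ q → q < i + r → (w p).1 = (w q).1 → p = q := by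
    intro i p q hp1 hp2 hq1 hq2 hpq
    obtain ⟨x, _, _, hs⟩ := hwin i
    have hsurj : Function.Surjective (fun j : Fin r => (w (i + (j : ℕ))).1) := hs
    have hin := Finite.injective_iff_surjective.2 hsurj
    have h := @hin ⟨(p - i).toNat, by omega⟩ ⟨(q - i).toNat, by omega⟩ (by
      have e1 : i + ((p - i).toNat : ℤ) = p := by omega
      have e2 : i + ((q - i).toNat : ℤ) = q := by omega
      simp only [e1, e2]
      exact hpq)
    have := Fin.mk.inj h
    omega
  have hper1 : ∀ i : ℤ, (w (i + r)).1 = (w i).1 := by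
    intro i
    obtain ⟨x, _, _, hs⟩ := hwin i
    obtain ⟨j, hj⟩ := hs (w (i + r)).1
    by_cases hj0 : (j : ℕ) = 0
    · rw [← hj, hj0]; simp
    · have := hinj (i + 1) (i + (j : ℕ)) (i + r) (by omega) (by omega) (by omega) (by omega) hj
      omega
  have hper : ∀ (i t : ℤ), (w (i + r * t)).1 = (w i).1 := by
    intro i t
    induction t using Int.induction_on with
    | zero => simp
    | succ t ih =>
      rw [← ih, ← hper1 (i + r * t)]
      congr 2; ring
    | pred t ih =>
      rw [← ih, ← hper1 (i + r * (-t - 1))]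
      congr 2; ring
  have hdvd : ∀ p q : ℤ, (w p).1 = (w q).1 → (r : ℤ) ∣ p - q := by
    intro p q hpq
    have h1 := Int.emod_add_mul_ediv (p - q) r
    have h2 := Int.emod_nonneg (p - q) (b := (r : ℤ)) (by omega)
    have h3 := Int.emod_lt_of_pos (p - q) (b := (r : ℤ)) (by omega)
    have h4 := hinj (q + r * ((p - q) / r)) p (q + r * ((p - q) / r)) (by omega) (by omega)
      (by omega) (by omega) (by rw [hper, hpq])
    exact ⟨(p - q) / r, by omega⟩
  have hrl : r ∣ ℓ := by
    have h : w ℓ = w 0 := by rw [hweq]; simp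
    have := hdvd ℓ 0 (by rw [h])
    rw [sub_zero] at this
    exact_mod_cast this
  obtain ⟨L, rfl⟩ := hrl
  have hL2 : 2 ≤ L := by
    by_contra h
    have : L = 0 ∨ L = 1 := by omega
    rcases this with rfl | rfl <;> simp at hℓ
  have hgood : ∀ i P Q S : ℤ, i ≤ P → P < i + r → i ≤ Q → Q < i + r → i ≤ S → S < i + r →
      (w P).1 = ⟨0, by omega⟩ → (w Q).1 = ⟨1, by omega⟩ → (w S).1 = ⟨2, by omega⟩ →
      col (w P).2 (w Q).2 = some (g (w S).2) := by
    intro i P Q S h1 h2 h3 h4 h5 h6 hP hQ hS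
    obtain ⟨x, hx, hx2, _⟩ := hwin i
    rw [hx2 P h1 h2, hx2 Q h3 h4, hx2 S h5 h6, hP, hQ, hS]
    exact hx
  obtain ⟨p, hp⟩ : ∃ p, (w p).1 = ⟨0, by omega⟩ := by
    obtain ⟨x, _, _, hs⟩ := hwin 0
    obtain ⟨j, hj⟩ := hs ⟨0, by omega⟩
    exact ⟨_, hj⟩
  obtain ⟨x, _, _, hs⟩ := hwin p
  obtain ⟨q, hq, hq1, hq2⟩ : ∃ q, (w q).1 = ⟨1, by omega⟩ ∧ p ≤ q ∧ q < p + r := by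
    obtain ⟨j, hj⟩ := hs ⟨1, by omega⟩
    exact ⟨_, hj, by omega, by omega⟩
  obtain ⟨s, hs, hs1, hs2⟩ : ∃ s, (w s).1 = ⟨2, by omega⟩ ∧ p ≤ s ∧ s < p + r := by
    obtain ⟨j, hj⟩ := hs ⟨2, by omega⟩
    exact ⟨_, hj, by omega, by omega⟩
  have hpq : p ≠ q := by
    rintro rfl
    rw [hp] at hq; simp at hq
  have hps : p ≠ s := by
    rintro rfl
    rw [hp] at hs; simp at hs
  have hqs : q ≠ s := by
    rintro rfl
    rw [hq] at hs; simp at hs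
  have hp' : ∀ t : ℤ, (w (p + r * t)).1 = ⟨0, by omega⟩ := fun t => by rw [hper, hp]
  have hq' : ∀ t : ℤ, (w (q + r * t)).1 = ⟨1, by omega⟩ := fun t => by rw [hper, hq]
  have hs' : ∀ t : ℤ, (w (s + r * t)).1 = ⟨2, by omega⟩ := fun t => by rw [hper, hs]
  have hcyc : ∀ (p : ℤ) (t u : ℤ), (w (p + r * t)).2 = (w (p + r * u)).2 ↔ (L : ℤ) ∣ t - u := by
    intro p t u
    have h1 : (w (p + r * t)).2 = (w (p + r * u)).2 ↔ w (p + r * t) = w (p + r * u) := by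
      rw [Prod.ext_iff, hper, hper]; simp
    rw [h1, hweq]
    have : p + (r : ℤ) * t - (p + r * u) = r * (t - u) := by ring
    rw [this]
    push_cast
    exact mul_dvd_mul_iff_left (by omega)
  have hsucc : ∀ t : ℤ, (r : ℤ) * (t + 1) = r * t + r := fun t => by ring
  have f1 : ∀ t : ℤ, col (w (p + r * t)).2 (w (q + r * t)).2 = some (g (w (s + r * t)).2) := by
    intro t
    exact hgood (p + r * t) _ _ _ (by omega) (by omega) (by omega) (by omega) (by omega) (by omega)
      (hp' t) (hq' t) (hs' t)
  have f2 : ∀ t : ℤ, col (w (p + r * (t + 1))).2 (w (q + r * t)).2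
      = some (g (w (s + r * t)).2) := by
    intro t
    have := hsucc t
    exact hgood (p + r * t + 1) _ _ _ (by omega) (by omega) (by omega) (by omega) (by omega)
      (by omega) (hp' _) (hq' t) (hs' t)
  have f3 : ∀ t : ℤ, g (w (s + r * (t + 1))).2 = g (w (s + r * t)).2 := by
    intro t
    have := hsucc t
    rcases lt_or_gt_of_ne hqs with h | h
    · have h5 := hgood (q + r * t + 1) (p + r * (t + 1)) (q + r * (t + 1)) (s + r * t)
        (by omega) (by omega) (by omega) (by omega) (by omega) (by omega) (hp' _) (hq' _) (hs' _)
      rw [f1 (t + 1)] at h5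
      exact Option.some.inj h5
    · have h5 := hgood (s + r * t + 1) (p + r * (t + 1)) (q + r * t) (s + r * (t + 1))
        (by omega) (by omega) (by omega) (by omega) (by omega) (by omega) (hp' _) (hq' _) (hs' _)
      rw [f2 t] at h5
      exact (Option.some.inj h5).symm
  have f4 : ∀ t : ℤ, g (w (s + r * t)).2 = g (w s).2 := by
    intro t
    induction t using Int.induction_on with
    | zero => simp
    | succ t ih => rw [f3, ih]
    | pred t ih =>
      rw [← ih]
      have := f3 (-t - 1)
      rw [sub_add_cancel] at this
      exact this.symm
  have hLk : L ≤ k := by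
    refine le_trans ?_ (hg (g (w s).2))
    have : (Finset.univ.image fun t : Fin L => (w (s + r * ((t : ℕ) : ℤ))).2).card = L := by
      rw [Finset.card_image_of_injective]
      · simp
      · intro t u htu
        have := (hcyc s _ _).1 htu
        have h3 := Int.eq_zero_of_abs_lt_dvd this (by rw [abs_lt]; constructor <;> omega)
        ext
        omega
    rw [← this]
    apply Finset.card_le_card
    intro c hc
    rw [Finset.mem_image] at hc
    obtain ⟨t, _, rfl⟩ := hc
    simp [f4]
  refine hcol (g (w s).2) ⟨L, hL2, hLk, fun t => (w (p + r * t)).2, fun t => (w (q + r * t)).2,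
    hcyc p, hcyc q, fun t => ⟨?_, ?_⟩⟩
  · rw [← f4 t]; exact f1 t
  · rw [← f4 t]; exact f2 t

/-- Transfer to `Fin n`. -/
lemma turan_ge {V : Type} [Fintype V] [DecidableEq V] {r n : ℕ} (hr : 0 < r)
    (hn : Fintype.card V ≤ n)
    (E : Finset (Finset V)) (hcard : ∀ e ∈ E, e.card = r)
    (hfree : TightCycleFree r (E : Set (Finset V))) : E.card ≤ tightCycleTuran r n := by
  obtain ⟨f⟩ : Nonempty (V ↪ Fin n) := Function.Embedding.nonempty_of_card_le (by simpa using hn)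
  have hinj : Function.Injective (Finset.map f) := Finset.map_injective f
  apply le_csSup
  · refine ⟨Fintype.card (Finset (Fin n)), ?_⟩
    rintro m ⟨E', _, _, rfl⟩
    exact Finset.card_le_univ _
  · refine ⟨E.image (Finset.map f), ?_, ?_, Finset.card_image_of_injective _ hinj⟩
    · intro e he
      obtain ⟨e', he', rfl⟩ := Finset.mem_image.1 he
      rw [Finset.card_map, hcard e' he']
    · rintro ⟨ℓ, hℓ, v, hv, hvE⟩
      apply hfree
      have hpre : ∀ i, ∃ u, f u = v i := by
        intro i
        obtain ⟨e, _, he⟩ := Finset.mem_image.1 (Finset.mem_coe.1 (hvE i))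
        have : v i ∈ tightWindow r v i := by
          rw [tightWindow, Finset.mem_image]
          exact ⟨⟨0, hr⟩, Finset.mem_univ _, by simp⟩
        rw [← he, Finset.mem_map] at this
        obtain ⟨u, _, hu⟩ := this
        exact ⟨u, hu⟩
      choose u hu using hpre
      refine ⟨ℓ, hℓ, u, ?_, ?_⟩
      · intro i j hij
        apply hv
        rw [← hu, ← hu, hij]
      · intro i
        obtain ⟨e, he, hee⟩ := Finset.mem_image.1 (Finset.mem_coe.1 (hvE i))
        have : Finset.map f (tightWindow r u i) = tightWindow r v i := by
          ext y
          simp [tightWindow, hu]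
        rw [← hee] at this
        rw [hinj this]
        exact he

open Finset in
lemma turan_count (m k M n : ℕ) (hk : 0 < k) (hM : 4 * (8 * k) ^ (2 * k) ≤ M)
    (hn : (m + 3) * (M * k) ≤ n) :
    (M * k) ^ (m + 2) * k ≤ 2 * tightCycleTuran (m + 3) n := by
  classical
  have hM0 : 0 < M := lt_of_lt_of_le (by positivity) hM
  let α : Type := Fin M × Fin k
  have hα : Fintype.card α = M * k := by simp [α]
  obtain ⟨col, hcol, hcount⟩ := coloring_exists (α := α) (J := Fin M) k (8 * k) (by omega)
    (by
      rw [hα, Fintype.card_fin, Nat.mul_div_mul_right _ _ hk]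
      omega)
    (by simpa using hM0)
    (by
      rw [hα]
      calc 4 * (k * (8 * k) ^ (2 * k)) = (4 * (8 * k) ^ (2 * k)) * k := by ring
        _ ≤ M * k := Nat.mul_le_mul_right _ hM)
  rw [hα] at hcount
  let good : Finset (Fin (m + 3) → α) :=
    {x | col (x ⟨0, by omega⟩) (x ⟨1, by omega⟩) = some (x ⟨2, by omega⟩).1}
  let E : Finset (Finset (Fin (m + 3) × α)) := good.image edgeOf
  have hEcard : E.card = good.card := Finset.card_image_of_injective _ edgeOf_injective
  have hE : E.card ≤ tightCycleTuran (m + 3) n := by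
    apply turan_ge (by omega)
    · rw [Fintype.card_prod, Fintype.card_fin, hα]; exact hn
    · intro e he
      obtain ⟨x, _, rfl⟩ := Finset.mem_image.1 he
      exact card_edgeOf x
    · apply free_of_coloring (by omega) k col hcol Prod.fst
      · intro j
        have hsub : (univ.filter fun c : α => c.1 = j) ⊆ (univ : Finset (Fin k)).image fun i => (j, i) := by
          rintro ⟨c1, c2⟩ hc
          simp only [Finset.mem_filter, Finset.mem_univ, true_and] at hc
          subst hc
          exact Finset.mem_image_of_mem _ (Finset.mem_univ _)
        calc _ ≤ _ := Finset.card_le_card hsub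
          _ ≤ #(univ : Finset (Fin k)) := Finset.card_image_le
          _ = k := by simp
      · intro e he
        obtain ⟨x, hx, rfl⟩ := Finset.mem_image.1 (Finset.mem_coe.1 he)
        exact ⟨x, (Finset.mem_filter.1 hx).2, rfl⟩
  let Q : Finset (α × α) := {p | col p.1 p.2 ≠ none}
  have hQ : #(Q ×ˢ ((univ : Finset (Fin k)) ×ˢ (univ : Finset (Fin m → α)))) ≤ good.card := by
    apply Finset.card_le_card_of_injOn (fun y : (α × α) × (Fin k × (Fin m → α)) =>
      (Fin.cons y.1.1 (Fin.cons y.1.2 (Fin.cons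
        (((col y.1.1 y.1.2).getD ⟨0, hM0⟩, y.2.1) : α) y.2.2)) : Fin (m + 3) → α))
    · rintro ⟨⟨a, b⟩, i, z⟩ hy
      simp only [Finset.coe_product, Set.mem_prod, Finset.mem_coe, Q, Finset.mem_filter,
        Finset.mem_univ, true_and] at hy
      have hy := hy.1
      simp only [good, Finset.coe_filter, Finset.mem_univ, true_and, Set.mem_ofPred_eq]
      change col a b = some ((col a b).getD ⟨0, hM0⟩)
      cases h : col a b with
      | none => exact absurd h hy
      | some j => rfl
    · rintro ⟨⟨a, b⟩, i, z⟩ _ ⟨⟨a', b'⟩, i', z'⟩ _ h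
      simp only [Fin.cons_inj, Prod.mk.injEq] at h
      obtain ⟨rfl, rfl, ⟨_, rfl⟩, rfl⟩ := h
      rfl
  have hQ' : #Q * (k * (M * k) ^ m) ≤ tightCycleTuran (m + 3) n := by
    refine le_trans ?_ (hE)
    rw [hEcard]
    refine le_trans (le_of_eq ?_) hQ
    rw [Finset.card_product, Finset.card_product, Finset.card_univ, Finset.card_univ,
      Fintype.card_fun, hα, Fintype.card_fin, Fintype.card_fin]
  calc (M * k) ^ (m + 2) * k = (M * k) ^ 2 * (k * (M * k) ^ m) := by ring
    _ ≤ (2 * #Q) * (k * (M * k) ^ m) := Nat.mul_le_mul_right _ hcount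
    _ = 2 * (#Q * (k * (M * k) ^ m)) := by ring
    _ ≤ _ := Nat.mul_le_mul_left _ hQ'

/-- The asymptotic estimates. -/
lemma turan_final (m n : ℕ) (X : ℝ) (hX : X = Real.log n) (hX256 : 256 ≤ X)
    (hY1 : 1 ≤ Real.log X) (hXY : 16 * Real.log X ≤ X)
    (hT : 5 * ((m : ℝ) + 3) ≤ Real.exp (X / 8)) :
    (1 / (64 * (2 * ((m : ℝ) + 3)) ^ (m + 2))) * (n : ℝ) ^ (m + 2) * X / Real.log X ≤
      (tightCycleTuran (m + 3) n : ℝ) := by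
  set Y := Real.log X with hY
  set T := Real.exp (X / 8) with hTdef
  have hXT : X ≤ T := by
    have h1 : X / 16 + 1 ≤ Real.exp (X / 16) := Real.add_one_le_exp _
    have h2 : T = Real.exp (X / 16) * Real.exp (X / 16) := by
      rw [hTdef, ← Real.exp_add]; ring_nf
    rw [h2]
    nlinarith
  have hn0 : (0 : ℝ) < n := by
    rcases Nat.eq_zero_or_pos n with h | h
    · subst h; simp at hX; linarith
    · exact_mod_cast h
  have hnT : (n : ℝ) = T ^ 8 := by
    rw [hTdef, ← Real.exp_nat_mul, ← Real.exp_log hn0, ← hX]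
    congr 1; push_cast; ring
  have hT1 : 1 ≤ T := by linarith
  have hm0 : (0 : ℝ) ≤ m := Nat.cast_nonneg m
  set z := X / (16 * Y) with hz
  have hz1 : 1 ≤ z := by rw [hz, le_div_iff₀ (by positivity)]; linarith
  set k := ⌊z⌋₊ with hk
  have hkz : (k : ℝ) ≤ z := Nat.floor_le (by linarith)
  have hk1 : 1 ≤ k := by rw [hk, Nat.one_le_floor_iff]; exact hz1
  have hk1' : (1 : ℝ) ≤ k := by exact_mod_cast hk1
  have hkz2 : z / 2 ≤ k := by
    have := Nat.lt_floor_add_one z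
    rw [← hk] at this
    linarith
  have hzX : z ≤ X / 16 := by
    rw [hz]
    apply div_le_div_of_nonneg_left <;> linarith
  have hkY : (k : ℝ) * Y ≤ X / 16 := by
    calc (k : ℝ) * Y ≤ z * Y := by gcongr
      _ = X / 16 := by rw [hz]; field_simp
  have hpow : ((8 * k : ℝ)) ^ (2 * k) ≤ T := by
    calc ((8 * k : ℝ)) ^ (2 * k) ≤ X ^ (2 * k) := by gcongr; linarith
      _ = Real.exp (2 * k * Y) := by
        conv_lhs => rw [← Real.exp_log (show 0 < X by linarith)]
        rw [← Real.exp_nat_mul]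
        push_cast
        rfl
      _ ≤ T := by
        rw [hTdef]
        apply Real.exp_le_exp.2
        linarith
  set M := n / ((m + 3) * k) with hM
  have hM1 : (n : ℝ) < ((m : ℝ) + 3) * k * (M + 1) := by
    have := Nat.lt_mul_div_succ n (show 0 < (m + 3) * k by positivity)
    rw [← hM] at this
    exact_mod_cast this
  have hkT : (k : ℝ) ≤ T := by linarith
  have hT2 : T * T ≤ T ^ 7 := by
    rw [← sq]; exact pow_le_pow_right₀ hT1 (by norm_num)
  have hMT : 4 * T ≤ M := by
    by_contra hcon
    push Not at hcon
    have h1 : ((m : ℝ) + 3) * k * (M + 1) ≤ ((m : ℝ) + 3) * T * (5 * T) := by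
      gcongr; linarith
    have h2 : ((m : ℝ) + 3) * T * (5 * T) ≤ T * (T * T) := by
      have : 0 ≤ T * T := by positivity
      nlinarith
    have h3 : T * (T * T) ≤ n := by
      rw [hnT]
      calc T * (T * T) = T ^ 3 := by ring
        _ ≤ T ^ 8 := pow_le_pow_right₀ hT1 (by norm_num)
    linarith
  have hMk : (n : ℝ) / (2 * ((m : ℝ) + 3)) ≤ M * k := by
    rw [div_le_iff₀ (by positivity)]
    have hM1' : (1 : ℝ) ≤ M := by linarith
    have : ((m : ℝ) + 3) * k * (M + 1) ≤ ((m : ℝ) + 3) * k * (M + M) := by gcongr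
    linarith
  have hmain := turan_count m k M n hk1
    (by
      have h : ((4 * (8 * k) ^ (2 * k) : ℕ) : ℝ) ≤ (M : ℝ) := by
        push_cast; linarith
      exact_mod_cast h)
    (by
      have := Nat.mul_div_le n ((m + 3) * k)
      rw [← hM] at this
      calc (m + 3) * (M * k) = (m + 3) * k * M := by ring
        _ ≤ n := this)
  have hmain' : ((M : ℝ) * k) ^ (m + 2) * k ≤ 2 * (tightCycleTuran (m + 3) n : ℝ) := by
    exact_mod_cast hmain
  have hlow : ((n : ℝ) / (2 * ((m : ℝ) + 3))) ^ (m + 2) * (z / 2) ≤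
      ((M : ℝ) * k) ^ (m + 2) * k := by gcongr
  have heq : (1 / (64 * (2 * ((m : ℝ) + 3)) ^ (m + 2))) * (n : ℝ) ^ (m + 2) * X / Y
      = (((n : ℝ) / (2 * ((m : ℝ) + 3))) ^ (m + 2) * (z / 2)) / 2 := by
    rw [hz, div_pow]
    have : Y ≠ 0 := by linarith
    field_simp
    norm_num
  rw [heq]
  linarith

/-- For each fixed `r ≥ 3`, `f_r(n) = Ω(n^{r-1} log n / log log n)`. -/
theorem tightCycleTuran_lower_bound (r : ℕ) (hr : 3 ≤ r) :
    ∃ c : ℝ, 0 < c ∧ ∃ N : ℕ, ∀ n : ℕ, N ≤ n →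
      c * (n : ℝ) ^ (r - 1) * Real.log n / Real.log (Real.log n) ≤
        (tightCycleTuran r n : ℝ) := by
  obtain ⟨m, rfl⟩ : ∃ m, r = m + 3 := ⟨r - 3, by omega⟩
  refine ⟨1 / (64 * (2 * ((m : ℝ) + 3)) ^ (m + 2)), by positivity, ?_⟩
  have hlog : Filter.Tendsto (fun n : ℕ => Real.log (n : ℝ)) Filter.atTop Filter.atTop :=
    Real.tendsto_log_atTop.comp tendsto_natCast_atTop_atTop
  have h1 : ∀ᶠ X : ℝ in Filter.atTop, 256 ≤ X := Filter.eventually_ge_atTop _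
  have h2 : ∀ᶠ X : ℝ in Filter.atTop, 1 ≤ Real.log X :=
    Real.tendsto_log_atTop.eventually_ge_atTop 1
  have h3 : ∀ᶠ X : ℝ in Filter.atTop, 16 * Real.log X ≤ X := by
    have := Real.isLittleO_log_id_atTop.bound (show (0 : ℝ) < 1 / 16 by norm_num)
    filter_upwards [this, h1] with X hX hX1
    have h5 := (le_abs_self _).trans hX
    simp only [id, Real.norm_eq_abs] at h5
    rw [abs_of_nonneg (by linarith)] at h5
    linarith
  have h4 : ∀ᶠ X : ℝ in Filter.atTop, 5 * ((m : ℝ) + 3) ≤ Real.exp (X / 8) :=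
    (Real.tendsto_exp_atTop.comp
      (Filter.tendsto_id.atTop_div_const (by norm_num : (0 : ℝ) < 8))).eventually_ge_atTop _
  obtain ⟨N, hN⟩ := Filter.eventually_atTop.1
    (hlog.eventually (h1.and (h2.and (h3.and h4))))
  refine ⟨N, fun n hn => ?_⟩
  obtain ⟨g1, g2, g3, g4⟩ := hN n hn
  exact turan_final m n _ rfl g1 g2 g3 g4
end

section
/- For each fixed integer r ≥ 3, the ratio f_r(n) / n^{r-1} tends to infinity as n → ∞. -/
/-- Vertices of a finite ball in the `S`-edge-coloured regular tree. -/
abbrev TreeBall (S : Type) (R : ℕ) : Type :=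
  {w : List S // w.IsChain (· ≠ ·) ∧ w.length ≤ R}

instance treeBall_finite (S : Type) [Finite S] (R : ℕ) : Finite (TreeBall S R) := by
  have h : {w : List S | w.length ≤ R}.Finite := List.finite_length_le S R
  exact (h.subset (fun w (hw : w.IsChain (· ≠ ·) ∧ w.length ≤ R) => hw.2)).to_subtype

/-- The flip along colour `i`, on lists. -/
def flipList {S : Type} [DecidableEq S] (R : ℕ) (i : S) : List S → List S
  | [] => if 0 < R then [i] else []
  | j :: w => if i = j then w else if w.length + 1 < R then i :: j :: w else j :: w

theorem flipList_mem {S : Type} [DecidableEq S] (R : ℕ) (i : S) (w : List S)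
    (h : w.IsChain (· ≠ ·) ∧ w.length ≤ R) :
    (flipList R i w).IsChain (· ≠ ·) ∧ (flipList R i w).length ≤ R := by
  cases w with
  | nil => unfold flipList; split_ifs <;> simp; omega
  | cons j w =>
    simp only [flipList]
    obtain ⟨h1, h2⟩ := h
    simp only [List.length_cons] at h2
    split_ifs with h3 h4
    · exact ⟨h1.tail, by omega⟩
    · exact ⟨List.IsChain.cons_cons h3 h1, by simp; omega⟩
    · exact ⟨h1, by simpa using h2⟩

theorem flipList_invol {S : Type} [DecidableEq S] (R : ℕ) (i : S) (w : List S)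
    (h : w.IsChain (· ≠ ·) ∧ w.length ≤ R) :
    flipList R i (flipList R i w) = w := by
  obtain ⟨h1, h2⟩ := h
  cases w with
  | nil => 
    by_cases hR : 0 < R <;> simp [flipList, hR]
  | cons j w =>
    simp only [List.length_cons] at h2
    by_cases h3 : i = j
    · subst h3
      cases w with
      | nil => simp [flipList]; omega
      | cons k w =>
        have : i ≠ k := by simp at h1; exact h1.1
        simp at h2
        simp [flipList, this]
        omega
    · by_cases h4 : w.length + 1 < R <;> simp [flipList, h3, h4]

/-- The flip along colour `i` as a permutation of the tree ball. -/
def flipPerm {S : Type} [DecidableEq S] (R : ℕ) (i : S) : Equiv.Perm (TreeBall S R) where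
  toFun w := ⟨flipList R i w.1, flipList_mem R i w.1 w.2⟩
  invFun w := ⟨flipList R i w.1, flipList_mem R i w.1 w.2⟩
  left_inv w := Subtype.ext (flipList_invol R i w.1 w.2)
  right_inv w := Subtype.ext (flipList_invol R i w.1 w.2)

theorem flipPerm_mul_self {S : Type} [DecidableEq S] (R : ℕ) (i : S) :
    flipPerm R i * flipPerm R i = 1 := by
  exact Equiv.ext (fun w => Subtype.ext (flipList_invol R i w.1 w.2))

theorem flipPerm_prod {S : Type} [DecidableEq S] (R : ℕ) (w : List S)
    (h : w.IsChain (· ≠ ·)) (hl : w.length ≤ R) :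
    ((w.map (flipPerm R)).prod ⟨[], by simp⟩ : TreeBall S R) = ⟨w, h, hl⟩ := by
  induction w with
  | nil => simp
  | cons i w ih =>
    have hl' : w.length ≤ R := by simp at hl; omega
    rw [List.map_cons, List.prod_cons, Equiv.Perm.mul_apply, ih h.tail hl']
    apply Subtype.ext
    change flipList R i w = i :: w
    cases w with
    | nil => simp at hl; simp [flipList]; omega
    | cons j w =>
      have : i ≠ j := by simp at h; exact h.1
      simp at hl
      simp [flipList, this]; omega

/-- Finite groups with involutions of large girth, of order any multiple of a fixed `N`. -/
theorem exists_girth_group (S : Type) [Finite S] (R : ℕ) :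
    ∃ N : ℕ, 0 < N ∧ ∀ q : ℕ, 0 < q → ∃ (G : Type) (_ : Group G) (_ : Finite G) (s : S → G),
      Nat.card G = N * q ∧ (∀ i, s i * s i = 1) ∧
      ∀ w : List S, w.IsChain (· ≠ ·) → w.length ≤ R → w ≠ [] → (w.map s).prod ≠ 1 := by
  classical
  refine ⟨Nat.card (Equiv.Perm (TreeBall S R)), Nat.card_pos, fun q hq => ?_⟩
  have : NeZero q := ⟨hq.ne'⟩
  refine ⟨Equiv.Perm (TreeBall S R) × Multiplicative (ZMod q), inferInstance, inferInstance,
    fun i => (flipPerm R i, 1), ?_, ?_, ?_⟩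
  · rw [Nat.card_prod]; congr 1; exact Nat.card_zmod q
  · intro i; simp [flipPerm_mul_self]
  · intro w h hl hne h1
    have h2 := congrArg (MonoidHom.fst (Equiv.Perm (TreeBall S R)) (Multiplicative (ZMod q))) h1
    rw [map_list_prod, List.map_map, map_one] at h2
    have h3 := flipPerm_prod R w h hl
    have h4 : (w.map (flipPerm R)).prod = 1 := h2
    rw [h4] at h3
    have := congrArg Subtype.val h3
    exact hne this.symm

/-- The basic tripartite relation. -/
def GRel {G : Type} [Group G] {K : ℕ} (s : Fin K × Fin K → G) (a b c : G × Fin K) : Prop :=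
  c.1 = b.1 * s (b.2, c.2) * a.1

theorem no_cycle_aux {G : Type} [Group G] {K : ℕ} (s : Fin K × Fin K → G)
    (hs : ∀ i, s i * s i = 1)
    (hw : ∀ w : List (Fin K × Fin K), w.IsChain (· ≠ ·) → w.length ≤ 2 * K → w ≠ [] →
      (w.map s).prod ≠ 1)
    (g : G) (b c : ℕ → G × Fin K) (m : ℕ) (hm : 0 < m) (hmK : m ≤ K)
    (h1 : ∀ k, (c k).1 = (b k).1 * s ((b k).2, (c k).2) * g)
    (h2 : ∀ k, (c k).1 = (b (k+1)).1 * s ((b (k+1)).2, (c k).2) * g)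
    (hb : ∀ k, b k ≠ b (k+1)) (hc : ∀ k, c k ≠ c (k+1)) (hper : b m = b 0) : False := by
  let L : ℕ → Fin K × Fin K := fun n => ((b ((n+1)/2)).2, (c (n/2)).2)
  have hL0 : ∀ k, L (2*k) = ((b k).2, (c k).2) := fun k => by
    simp only [L]; rw [show (2*k+1)/2 = k by omega, show 2*k/2 = k by omega]
  have hL1 : ∀ k, L (2*k+1) = ((b (k+1)).2, (c k).2) := fun k => by
    simp only [L]; rw [show (2*k+1+1)/2 = k+1 by omega, show (2*k+1)/2 = k by omega]
  have key : ∀ k, (b k).1 = (b 0).1 * (((List.range (2*k)).map L).map s).prod := by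
    intro k
    induction k with
    | zero => simp
    | succ k ih =>
      rw [show 2 * (k+1) = (2*k+1)+1 by ring, List.range_succ, List.range_succ]
      simp only [List.map_append, List.prod_append, List.map_cons, List.map_nil,
        List.prod_cons, List.prod_nil, mul_one]
      rw [← mul_assoc, ← mul_assoc, ← ih, hL0, hL1]
      have e : (b k).1 * s ((b k).2, (c k).2) = (b (k+1)).1 * s ((b (k+1)).2, (c k).2) :=
        mul_right_cancel ((h1 k).symm.trans (h2 k))
      rw [e, mul_assoc, hs, mul_one]
  have hstep : ∀ n, L n ≠ L (n+1) := by
    intro n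
    obtain ⟨k, rfl | rfl⟩ := Nat.even_or_odd' n
    · rw [hL0, hL1]
      intro h
      have h3 : (b k).2 = (b (k+1)).2 := (Prod.mk.inj h).1
      apply hb k
      refine Prod.ext ?_ h3
      have := (h1 k).symm.trans (h2 k)
      rw [h3] at this
      exact mul_right_cancel (mul_right_cancel this)
    · rw [hL1, show 2*k+1+1 = 2*(k+1) by ring, hL0]
      intro h
      have h3 : (c k).2 = (c (k+1)).2 := (Prod.mk.inj h).2
      apply hc k
      refine Prod.ext ?_ h3
      rw [h2 k, h1 (k+1), h3]
  apply hw ((List.range (2*m)).map L)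
  · rw [List.isChain_iff_getElem]
    intro i hi
    simpa using hstep i
  · simp; omega
  · simp; omega
  · have := key m
    rw [hper] at this
    simpa using this.symm

theorem no_cycle {G : Type} [Group G] {K : ℕ} (s : Fin K × Fin K → G)
    (hs : ∀ i, s i * s i = 1)
    (hw : ∀ w : List (Fin K × Fin K), w.IsChain (· ≠ ·) → w.length ≤ 2 * K → w ≠ [] →
      (w.map s).prod ≠ 1)
    (a b c : ℕ → G × Fin K) (m : ℕ) (hm : 2 ≤ m)
    (ha : ∀ k k', a k = a k' → k ≡ k' [MOD m])
    (hb : ∀ k k', b k = b k' → k ≡ k' [MOD m])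
    (hc : ∀ k k', c k = c k' → k ≡ k' [MOD m])
    (hbm : b m = b 0)
    (h1 : ∀ k, GRel s (a k) (b k) (c k))
    (h2 : ∀ k, GRel s (a (k+1)) (b k) (c k))
    (h3 : (∀ k, GRel s (a (k+1)) (b (k+1)) (c k)) ∨ (∀ k, GRel s (a (k+1)) (b k) (c (k+1)))) :
    False := by
  have hg1 : ∀ k, (a (k+1)).1 = (a k).1 := fun k =>
    mul_left_cancel ((h2 k).symm.trans (h1 k))
  have hg : ∀ k, (a k).1 = (a 0).1 := by
    intro k
    induction k with
    | zero => rfl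
    | succ k ih => rw [hg1, ih]
  have hmK : m ≤ K := by
    have hinj : Function.Injective (fun k : Fin m => (a k).2) := by
      intro k k' h
      have h4 : a k = a k' := Prod.ext ((hg k).trans (hg k').symm) h
      have := ha _ _ h4
      exact Fin.ext (Nat.ModEq.eq_of_lt_of_lt this k.2 k'.2)
    simpa using Fintype.card_le_of_injective _ hinj
  have hne : ∀ k, ¬ k ≡ k + 1 [MOD m] := by
    intro k h
    have h4 : (1 : ℕ) ≡ 0 [MOD m] := Nat.ModEq.add_left_cancel' k (by simpa using h.symm)
    have := Nat.ModEq.eq_of_lt_of_lt h4 (by omega) (by omega)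
    omega
  unfold GRel at h1 h2 h3
  simp only [hg] at h1 h2 h3
  rcases h3 with h3 | h3
  · exact no_cycle_aux s hs hw _ b c m (by omega) hmK h1 h3
      (fun k h => hne k (hb _ _ h)) (fun k h => hne k (hc _ _ h)) hbm
  · exact no_cycle_aux s hs hw _ b (fun k => c (k+1)) m (by omega) hmK h3 (fun k => h1 (k+1))
      (fun k h => hne k (hb _ _ h)) (fun k h => hne (k+1) (hc _ _ h)) hbm

/-- The edge of the `r`-partite hypergraph given by a choice of one vertex in each part. -/
def partEdge {V M : Type} [DecidableEq V] {r : ℕ} (φ : Fin r × M ↪ V) (f : Fin r → M) :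
    Finset V :=
  Finset.univ.image (fun k => φ (k, f k))

theorem mem_partEdge {V M : Type} [DecidableEq V] {r : ℕ} (φ : Fin r × M ↪ V) (f : Fin r → M)
    (k : Fin r) (x : M) : φ (k, x) ∈ partEdge φ f ↔ x = f k := by
  unfold partEdge
  simp only [Finset.mem_image, Finset.mem_univ, true_and]
  constructor
  · rintro ⟨k', h⟩
    have := φ.injective h
    simp only [Prod.mk.injEq] at this
    obtain ⟨rfl, h2⟩ := this
    exact h2.symm
  · rintro rfl
    exact ⟨k, rfl⟩

theorem partEdge_card {V M : Type} [DecidableEq V] {r : ℕ} (φ : Fin r × M ↪ V) (f : Fin r → M) :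
    (partEdge φ f).card = r := by
  unfold partEdge
  rw [Finset.card_image_of_injective]
  · simp
  · intro k k' h
    exact (Prod.mk.inj (φ.injective h)).1

theorem partEdge_injective {V M : Type} [DecidableEq V] {r : ℕ} (φ : Fin r × M ↪ V) :
    Function.Injective (partEdge φ) := by
  intro f f' h
  funext k
  rw [← mem_partEdge φ f' k, ← h, mem_partEdge]

theorem cycleFree_aux {V M : Type} [DecidableEq V] {r : ℕ} (hr : 3 ≤ r)
    (φ : Fin r × M ↪ V) (Rel : M → M → M → Prop)
    (hRel : ∀ (a b c : ℕ → M) (m : ℕ), 2 ≤ m →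
      (∀ k k', a k = a k' → k ≡ k' [MOD m]) →
      (∀ k k', b k = b k' → k ≡ k' [MOD m]) →
      (∀ k k', c k = c k' → k ≡ k' [MOD m]) →
      b m = b 0 →
      (∀ k, Rel (a k) (b k) (c k)) →
      (∀ k, Rel (a (k+1)) (b k) (c k)) →
      ((∀ k, Rel (a (k+1)) (b (k+1)) (c k)) ∨ (∀ k, Rel (a (k+1)) (b k) (c (k+1)))) → False)
    (E : Set (Finset V))
    (hE : ∀ e ∈ E, ∃ f : Fin r → M,
      Rel (f ⟨0, by omega⟩) (f ⟨1, by omega⟩) (f ⟨2, by omega⟩) ∧ e = partEdge φ f) :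
    TightCycleFree r E := by
  rintro ⟨ℓ, hℓ, v, hv, hw⟩
  let u : ℕ → V := fun i => v (i : ZMod ℓ)
  have hu : ∀ i j, u i = u j ↔ i ≡ j [MOD ℓ] := fun i j => by
    rw [← ZMod.natCast_eq_natCast_iff]
    exact hv.eq_iff
  have hwin : ∀ i : ℕ, ∃ f : Fin r → M,
      Rel (f ⟨0, by omega⟩) (f ⟨1, by omega⟩) (f ⟨2, by omega⟩) ∧
      ∀ x, (∃ j, j < r ∧ u (i + j) = x) ↔ x ∈ partEdge φ f := by
    intro i
    obtain ⟨f, hf, he⟩ := hE _ (hw (i : ZMod ℓ))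
    refine ⟨f, hf, fun x => ?_⟩
    rw [← he]
    simp only [tightWindow, Finset.mem_image, Finset.mem_univ, true_and, u]
    constructor
    · rintro ⟨j, hj, h⟩
      exact ⟨⟨j, hj⟩, by simpa using h⟩
    · rintro ⟨j, h⟩
      exact ⟨j, j.2, by simpa using h⟩
  choose F hF hF' using hwin
  have hpw : ∀ i, ∃ y : Fin r × M, u i = φ y := by
    intro i
    have h := (hF' i (u i)).1 ⟨0, by omega, rfl⟩
    unfold partEdge at h
    simp only [Finset.mem_image, Finset.mem_univ, true_and] at h
    obtain ⟨k, hk⟩ := h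
    exact ⟨_, hk.symm⟩
  choose y hy using hpw
  let p : ℕ → Fin r := fun i => (y i).1
  let w : ℕ → M := fun i => (y i).2
  have hyu : ∀ i j, u i = u j ↔ y i = y j := fun i j => by rw [hy, hy, φ.injective.eq_iff]
  have hwF : ∀ i j, j < r → w (i + j) = F i (p (i + j)) := by
    intro i j hj
    have h := (hF' i (u (i + j))).1 ⟨j, hj, rfl⟩
    rw [hy] at h
    exact (mem_partEdge φ (F i) (p (i+j)) (w (i+j))).1 h
  have hsurj : ∀ i (k : Fin r), ∃ j, j < r ∧ p (i + j) = k := by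
    intro i k
    obtain ⟨j, hj, h⟩ := (hF' i (φ (k, F i k))).2 ((mem_partEdge _ _ _ _).2 rfl)
    refine ⟨j, hj, ?_⟩
    rw [hy] at h
    have := φ.injective h
    simp only [p, this]
  have hinj : ∀ i j j', j < r → j' < r → p (i + j) = p (i + j') → j = j' := by
    intro i j j' hj hj' h
    have hs : Function.Surjective (fun j : Fin r => p (i + j)) := by
      intro k
      obtain ⟨j, hj, h⟩ := hsurj i k
      exact ⟨⟨j, hj⟩, h⟩
    have hi := Finite.injective_iff_surjective.2 hs
    have := @hi ⟨j, hj⟩ ⟨j', hj'⟩ h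
    exact congrArg Fin.val this
  have hper : ∀ i, p (i + r) = p i := by
    intro i
    obtain ⟨j, hj, h⟩ := hsurj (i + 1) (p i)
    by_cases hjr : j = r - 1
    · rw [← h]; congr 1; omega
    · exfalso
      have h2 : p (i + (j + 1)) = p (i + 0) := by
        rw [show i + (j + 1) = i + 1 + j by ring, h]; simp
      have := hinj i (j+1) 0 (by omega) (by omega) h2
      omega
  have hperk : ∀ i k, p (i + r * k) = p i := by
    intro i k
    induction k with
    | zero => simp
    | succ k ih => rw [show i + r * (k + 1) = i + r * k + r by ring, hper, ih]
  have hdvd : r ∣ ℓ := by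
    have h1 : p (0 + ℓ % r) = p (0 + 0) := by
      rw [← hperk (0 + ℓ % r) (ℓ / r), add_assoc, Nat.mod_add_div]
      have : y (0 + ℓ) = y (0 + 0) := by
        rw [← hyu, hu]; simp [Nat.ModEq]
      simp only [p, this]
    have := hinj 0 _ 0 (Nat.mod_lt _ (by omega)) (by omega) h1
    exact Nat.dvd_of_mod_eq_zero this
  obtain ⟨m, rfl⟩ := hdvd
  have hm : 2 ≤ m := by
    by_contra h
    have : m ≤ 1 := by omega
    have : r * m ≤ r * 1 := Nat.mul_le_mul_left r this
    omega
  have hrel : ∀ i x y z, i ≤ x → x < i + r → i ≤ y → y < i + r → i ≤ z → z < i + r →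
      p x = ⟨0, by omega⟩ → p y = ⟨1, by omega⟩ → p z = ⟨2, by omega⟩ →
      Rel (w x) (w y) (w z) := by
    intro i x y z hx hx' hy hy' hz hz' hpx hpy hpz
    obtain ⟨x, rfl⟩ := Nat.exists_eq_add_of_le hx
    obtain ⟨y, rfl⟩ := Nat.exists_eq_add_of_le hy
    obtain ⟨z, rfl⟩ := Nat.exists_eq_add_of_le hz
    rw [hwF i x (by omega), hwF i y (by omega), hwF i z (by omega), hpx, hpy, hpz]
    exact hF i
  obtain ⟨α, -, hα⟩ := hsurj 0 ⟨0, by omega⟩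
  rw [zero_add] at hα
  obtain ⟨β, hβr, hβ⟩ := hsurj α ⟨1, by omega⟩
  obtain ⟨γ, hγr, hγ⟩ := hsurj α ⟨2, by omega⟩
  have hβ0 : β ≠ 0 := by
    rintro rfl
    rw [add_zero, hα] at hβ
    simp at hβ
  have hγ0 : γ ≠ 0 := by
    rintro rfl
    rw [add_zero, hα] at hγ
    simp at hγ
  have hβγ : β ≠ γ := by
    rintro rfl
    rw [hβ] at hγ
    simp at hγ
  have hmod : ∀ (t k k' : ℕ), w (t + r * k) = w (t + r * k') → k ≡ k' [MOD m] := by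
    intro t k k' h
    have h1 : y (t + r * k) = y (t + r * k') :=
      Prod.ext ((hperk t k).trans (hperk t k').symm) h
    rw [← hyu, hu] at h1
    exact Nat.ModEq.mul_left_cancel' (by omega) (Nat.ModEq.add_left_cancel' t h1)
  have hrk : ∀ k, r * (k + 1) = r * k + r := fun k => by ring
  refine hRel (fun k => w (α + r * k)) (fun k => w (α + β + r * k)) (fun k => w (α + γ + r * k))
    m hm (hmod _) (hmod _) (hmod _) ?_ ?_ ?_ ?_
  · have : y (α + β + r * m) = y (α + β + r * 0) := by
      rw [← hyu, hu]; simp [Nat.ModEq]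
    simp only [w, this]
  · intro k
    apply hrel (α + r * k) <;> first | omega | (rw [hperk]; assumption)
  · intro k
    apply hrel (α + r * k + 1) <;> first | (rw [hperk]; assumption) | (have := hrk k; omega)
  · rcases Nat.lt_or_gt_of_ne hβγ with h | h
    · left
      intro k
      apply hrel (α + γ + r * k) <;> first | (rw [hperk]; assumption) | (have := hrk k; omega)
    · right
      intro k
      apply hrel (α + β + r * k) <;> first | (rw [hperk]; assumption) | (have := hrk k; omega)

theorem rel_count {G : Type} [Group G] [Fintype G] [DecidableEq G] {K r : ℕ} (hr : 3 ≤ r)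
    (s : Fin K × Fin K → G) (T : Finset (Fin r → G × Fin K))
    (hT : ∀ f, GRel s (f ⟨0, by omega⟩) (f ⟨1, by omega⟩) (f ⟨2, by omega⟩) → f ∈ T) :
    K * (Fintype.card G * K) ^ (r - 1) ≤ T.card := by
  let i2 : Fin r := ⟨2, by omega⟩
  let Φ : ({k : Fin r // k ≠ i2} → G × Fin K) × Fin K → (Fin r → G × Fin K) := fun hj k =>
    if h : k = i2 then
      ((hj.1 ⟨⟨1, by omega⟩, by simp [i2]⟩).1 * s ((hj.1 ⟨⟨1, by omega⟩, by simp [i2]⟩).2, hj.2)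
        * (hj.1 ⟨⟨0, by omega⟩, by simp [i2]⟩).1, hj.2)
    else hj.1 ⟨k, h⟩
  have hΦ : Function.Injective Φ := by
    rintro ⟨h, j⟩ ⟨h', j'⟩ e
    have e1 : j = j' := by
      have := congrArg Prod.snd (congrFun e i2)
      simpa [Φ] using this
    have e2 : h = h' := by
      funext k
      have := congrFun e k.1
      simpa [Φ, k.2] using this
    rw [e1, e2]
  have hsub : Finset.univ.image Φ ⊆ T := by
    intro f hf
    simp only [Finset.mem_image, Finset.mem_univ, true_and] at hf
    obtain ⟨hj, rfl⟩ := hf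
    apply hT
    simp [GRel, Φ, i2]
  have := Finset.card_le_card hsub
  rw [Finset.card_image_of_injective _ hΦ] at this
  simpa [Finset.card_univ, Fintype.card_subtype_compl, mul_comm] using this

theorem turan_lower (r : ℕ) (hr : 3 ≤ r) (K : ℕ) :
    ∃ N : ℕ, 0 < N ∧ ∀ q n : ℕ, 0 < q → r * (N * q * K) ≤ n →
      K * (N * q * K) ^ (r - 1) ≤ tightCycleTuran r n := by
  classical
  obtain ⟨N, hN, hG⟩ := exists_girth_group (Fin K × Fin K) (2 * K)
  refine ⟨N, hN, fun q n hq hn => ?_⟩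
  obtain ⟨G, _, _, s, hcard, hs, hw⟩ := hG q hq
  have : Fintype G := Fintype.ofFinite G
  rw [Nat.card_eq_fintype_card] at hcard
  have hφ : Nonempty (Fin r × (G × Fin K) ↪ Fin n) := by
    apply Function.Embedding.nonempty_of_card_le
    simpa [hcard] using hn
  obtain ⟨φ⟩ := hφ
  let T : Finset (Fin r → G × Fin K) := Finset.univ.filter
    (fun f => GRel s (f ⟨0, by omega⟩) (f ⟨1, by omega⟩) (f ⟨2, by omega⟩))
  have hTc := rel_count hr s T (fun f hf => by simpa [T] using hf)
  rw [hcard] at hTc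
  refine hTc.trans ?_
  unfold tightCycleTuran
  apply le_csSup
  · refine ⟨2 ^ n, ?_⟩
    rintro m ⟨E, -, -, rfl⟩
    simpa using Finset.card_le_univ E
  · refine ⟨T.image (partEdge φ), ?_, ?_, Finset.card_image_of_injective _ (partEdge_injective φ)⟩
    · intro e he
      obtain ⟨f, -, rfl⟩ := Finset.mem_image.1 he
      exact partEdge_card φ f
    · refine cycleFree_aux hr φ (GRel s) (fun a b c m => no_cycle s hs hw a b c m) _ ?_
      intro e he
      obtain ⟨f, hf, rfl⟩ := Finset.mem_image.1 (Finset.mem_coe.1 he)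
      exact ⟨f, by simpa [T] using hf, rfl⟩

/-- For each fixed `r ≥ 3`, `f_r(n) / n^{r-1} → ∞` as `n → ∞`. -/
theorem tightCycleTuran_div_tendsto_atTop (r : ℕ) (hr : 3 ≤ r) :
    Filter.Tendsto (fun n : ℕ => (tightCycleTuran r n : ℝ) / (n : ℝ) ^ (r - 1))
      Filter.atTop Filter.atTop := by

  rw [Filter.tendsto_atTop]
  intro C
  obtain ⟨K, hK⟩ := exists_nat_ge (max 1 (C * (2 * r : ℝ) ^ (r - 1)))
  have hK1 : 0 < K := by
    have : (1 : ℝ) ≤ K := (le_max_left _ _).trans hK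
    exact_mod_cast this
  have hKC : C * (2 * r : ℝ) ^ (r - 1) ≤ K := (le_max_right _ _).trans hK
  obtain ⟨N, hN, hlow⟩ := turan_lower r hr K
  have hD : 0 < r * (N * K) := by positivity
  filter_upwards [Filter.eventually_ge_atTop (r * (N * K))] with n hn
  have hq : 0 < n / (r * (N * K)) := Nat.div_pos hn hD
  set q := n / (r * (N * K)) with hqdef
  have h1 : r * (N * K) * q ≤ n := Nat.mul_div_le n _
  have h2 : n < r * (N * K) * (q + 1) := by
    exact Nat.lt_mul_div_succ n hD
  have h3 := hlow q n hq (by linarith [h1, show r * (N * q * K) = r * (N * K) * q by ring])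
  have h4 : n ≤ 2 * r * (N * q * K) := by nlinarith
  have hnpos : (0 : ℝ) < n := by exact_mod_cast lt_of_lt_of_le hD hn
  rw [le_div_iff₀ (by positivity)]
  have h5 : (n : ℝ) ^ (r - 1) ≤ (2 * r : ℝ) ^ (r - 1) * (N * q * K : ℝ) ^ (r - 1) := by
    rw [← mul_pow]
    exact pow_le_pow_left₀ hnpos.le (by exact_mod_cast h4) _
  have h6 : (K : ℝ) * (N * q * K : ℝ) ^ (r - 1) ≤ tightCycleTuran r n := by exact_mod_cast h3
  rcases le_or_gt C 0 with hC | hC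
  · exact (mul_nonpos_of_nonpos_of_nonneg hC (by positivity)).trans (by positivity)
  · calc C * (n : ℝ) ^ (r - 1)
        ≤ C * ((2 * r : ℝ) ^ (r - 1) * (N * q * K : ℝ) ^ (r - 1)) := by gcongr
      _ = C * (2 * r : ℝ) ^ (r - 1) * (N * q * K : ℝ) ^ (r - 1) := by ring
      _ ≤ K * (N * q * K : ℝ) ^ (r - 1) := by gcongr
      _ ≤ _ := h6
end

section
/- For every ε > 0 there exist α > 0 and N such that for all n ≥ N and all positive integers k ≤ α · log n / log log n, there exists a tight-cycle-free 3-partite 3-uniform hypergraph on at most 3n vertices with at least (1 − ε) k n² hyperedges. Consequently, f_3(n) = Ω(n² log n / log log n). -/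
/-- vertices of the first class at odd distance at most `2 * j + 1` from `b` -/
def hgBall {A B : Type*} [DecidableEq A] [DecidableEq B] (G : Finset (A × B)) (b : B) :
    ℕ → Finset A
  | 0 => (G.filter (fun p => p.2 = b)).image Prod.fst
  | j + 1 => (hgBall G b j).biUnion fun a =>
      (G.filter (fun p => p.1 = a)).biUnion fun p =>
        (G.filter (fun q => q.2 = p.2)).image Prod.fst

/-- no cycles of length at most `2 * k` -/
def HighGirth {A B : Type*} (G : Finset (A × B)) (k : ℕ) : Prop :=
  ∀ ℓ : ℕ, 2 ≤ ℓ → ℓ ≤ k → ∀ (y : ZMod ℓ → A) (z : ZMod ℓ → B),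
    Function.Injective y → Function.Injective z →
    ¬ (∀ t, (y t, z t) ∈ G ∧ (y (t + 1), z t) ∈ G)

section HG
variable {A B : Type*} [DecidableEq A] [DecidableEq B]

lemma mem_hgBall_zero {G : Finset (A × B)} {a : A} {b : B} :
    a ∈ hgBall G b 0 ↔ (a, b) ∈ G := by
  simp [hgBall]

lemma mem_hgBall_succ {G : Finset (A × B)} {a : A} {b : B} {j : ℕ} :
    a ∈ hgBall G b (j + 1) ↔ ∃ a' ∈ hgBall G b j, ∃ b', (a', b') ∈ G ∧ (a, b') ∈ G := by
  simp [hgBall]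

lemma hgBall_adj {G : Finset (A × B)} {a : A} {b : B} {j : ℕ} (h : a ∈ hgBall G b j) :
    ∃ b', (a, b') ∈ G := by
  cases j with
  | zero => exact ⟨b, mem_hgBall_zero.1 h⟩
  | succ j =>
    obtain ⟨a', _, b', _, h2⟩ := mem_hgBall_succ.1 h
    exact ⟨b', h2⟩

lemma hgBall_mono {G : Finset (A × B)} {b : B} {i j : ℕ} (h : i ≤ j) :
    hgBall G b i ⊆ hgBall G b j := by
  induction h with
  | refl => exact Finset.Subset.refl _
  | step _ ih =>
    intro a ha
    obtain ⟨b', hb'⟩ := hgBall_adj (ih ha)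
    exact mem_hgBall_succ.2 ⟨a, ih ha, b', hb', hb'⟩

lemma hgBall_card {G : Finset (A × B)} {D : ℕ}
    (h1 : ∀ a, (G.filter (fun p => p.1 = a)).card ≤ D)
    (h2 : ∀ b, (G.filter (fun p => p.2 = b)).card ≤ D) (b : B) (j : ℕ) :
    (hgBall G b j).card ≤ D ^ (2 * j + 1) := by
  induction j with
  | zero => simpa [hgBall] using Finset.card_image_le.trans (h2 b)
  | succ j ih =>
    have : (hgBall G b (j + 1)).card ≤ (hgBall G b j).card * (D * D) := by
      refine Finset.card_biUnion_le_card_mul _ _ _ fun a _ => ?_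
      refine (Finset.card_biUnion_le_card_mul _ _ D fun p _ => ?_).trans
        (Nat.mul_le_mul_right _ (h1 a))
      exact Finset.card_image_le.trans (h2 _)
    calc _ ≤ _ := this
      _ ≤ D ^ (2 * j + 1) * (D * D) := Nat.mul_le_mul_right _ ih
      _ = _ := by ring

lemma highGirth_aux {G : Finset (A × B)} {k : ℕ} {a : A} {b : B}
    (hab : a ∉ hgBall G b (k - 1)) (ℓ : ℕ) (hl : 2 ≤ ℓ) (hk : ℓ ≤ k)
    (y : ZMod ℓ → A) (z : ZMod ℓ → B)
    (hy : Function.Injective y) (hz : Function.Injective z)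
    (H : ∀ t, (y t, z t) ∈ insert (a, b) G ∧ (y (t + 1), z t) ∈ insert (a, b) G)
    (t : ZMod ℓ) (ht : (y t, z t) = (a, b)) : False := by
  have : NeZero ℓ := ⟨by omega⟩
  have : Fact (1 < ℓ) := ⟨by omega⟩
  obtain ⟨rfl, rfl⟩ := Prod.mk.inj ht
  have key1 : ∀ s, (y (s + 1), z s) ∈ G := by
    intro s
    rcases Finset.mem_insert.1 (H s).2 with h | h
    · obtain ⟨h1, h2⟩ := Prod.mk.inj h
      have e1 := hy h1
      have e2 := hz h2
      subst e2
      simp at e1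
    · exact h
  have key2 : ∀ s, s ≠ t → (y s, z s) ∈ G := by
    intro s hs
    rcases Finset.mem_insert.1 (H s).1 with h | h
    · exact absurd (hy (Prod.mk.inj h).1) hs
    · exact h
  have key3 : ∀ j : ℕ, j + 1 ≤ ℓ → y (t + ((j + 1 : ℕ) : ZMod ℓ)) ∈ hgBall G (z t) j := by
    intro j
    induction j with
    | zero =>
      intro _
      simpa [mem_hgBall_zero] using key1 t
    | succ j ih =>
      intro hj
      refine mem_hgBall_succ.2 ⟨_, ih (by omega), z (t + ((j + 1 : ℕ) : ZMod ℓ)), key2 _ ?_, ?_⟩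
      · intro h
        have h0 : ((j + 1 : ℕ) : ZMod ℓ) = 0 := by simpa using h
        rw [ZMod.natCast_eq_zero_iff] at h0
        have := Nat.le_of_dvd (by omega) h0
        omega
      · have := key1 (t + ((j + 1 : ℕ) : ZMod ℓ))
        convert this using 3
        push_cast
        ring
  have := key3 (ℓ - 1) (by omega)
  rw [Nat.sub_add_cancel (by omega), ZMod.natCast_self, add_zero] at this
  exact hab (hgBall_mono (by omega) this)

lemma highGirth_insert {G : Finset (A × B)} {k : ℕ} {a : A} {b : B} (hG : HighGirth G k)
    (hab : a ∉ hgBall G b (k - 1)) : HighGirth (insert (a, b) G) k := by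
  intro ℓ hl hk y z hy hz H
  by_cases h1 : ∃ t, (y t, z t) = (a, b)
  · obtain ⟨t, ht⟩ := h1
    exact highGirth_aux hab ℓ hl hk y z hy hz H t ht
  by_cases h2 : ∃ t, (y (t + 1), z t) = (a, b)
  · obtain ⟨t, ht⟩ := h2
    refine highGirth_aux hab ℓ hl hk (fun s => y (1 - s)) (fun s => z (-s)) ?_ ?_ ?_ (-t) ?_
    · intro s s' h
      simpa using hy h
    · intro s s' h
      simpa using hz h
    · intro s
      have := H (-s)
      refine ⟨?_, ?_⟩
      · have h := this.2
        rwa [show -s + 1 = 1 - s by ring] at h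
      · have h := this.1
        rwa [show (-s : ZMod ℓ) = 1 - (s + 1) by ring, show (1 - (s + 1) : ZMod ℓ) = 1 - (s + 1) from rfl,
          show z (1 - (s + 1)) = z (-s) by congr 1; ring] at h
    · rw [← ht]
      simp [add_comm]
  push Not at h1 h2
  refine hG ℓ hl hk y z hy hz fun t => ⟨?_, ?_⟩
  · exact (Finset.mem_insert.1 (H t).1).resolve_left (h1 t)
  · exact (Finset.mem_insert.1 (H t).2).resolve_left (h2 t)

end HG

lemma highGirth_exists {n k D : ℕ} (hk : 0 < k) (R : Finset (Fin n × Fin n)) (hD : 0 < D)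
    (hR : 2 * k * n ^ 2 + n * D ^ (2 * k + 1) < D * R.card) :
    ∃ G ⊆ R, G.card = k * n ∧ HighGirth G k := by
  classical
  let S : Finset (Finset (Fin n × Fin n)) := R.powerset.filter fun G =>
    HighGirth G k ∧ (∀ a, (G.filter (fun p => p.1 = a)).card ≤ D) ∧
    (∀ b, (G.filter (fun p => p.2 = b)).card ≤ D) ∧ G.card ≤ k * n
  have hS : S.Nonempty := by
    refine ⟨∅, ?_⟩
    simp only [S, Finset.mem_filter, Finset.empty_mem_powerset, true_and]
    refine ⟨?_, by simp, by simp, by simp⟩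
    intro ℓ _ _ y z _ _ H
    simpa using (H 0).1
  obtain ⟨G, hGS, hmax⟩ := Finset.exists_max_image S Finset.card hS
  simp only [S, Finset.mem_filter, Finset.mem_powerset] at hGS
  obtain ⟨hGR, hGg, hd1, hd2, hc⟩ := hGS
  refine ⟨G, hGR, ?_, hGg⟩
  by_contra hne
  have hlt : G.card < k * n := lt_of_le_of_ne hc hne
  let SA : Finset (Fin n) := Finset.univ.filter fun a => (G.filter (fun p => p.1 = a)).card = D
  let SB : Finset (Fin n) := Finset.univ.filter fun b => (G.filter (fun p => p.2 = b)).card = D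
  let NR : Finset (Fin n × Fin n) := Finset.univ.biUnion fun b =>
    (hgBall G b (k - 1)).image fun a => (a, b)
  have hcov : R ⊆ (SA ×ˢ Finset.univ ∪ Finset.univ ×ˢ SB) ∪ NR := by
    rintro ⟨a, b⟩ hab
    by_contra hnot
    simp only [Finset.mem_union, Finset.mem_product, Finset.mem_univ, and_true, true_and, SA, SB, NR,
      Finset.mem_filter, Finset.mem_biUnion, Finset.mem_image, Prod.mk.injEq, not_or] at hnot
    obtain ⟨⟨n1, n2⟩, n3⟩ := hnot
    have n3' : a ∉ hgBall G b (k - 1) := fun h => n3 ⟨b, a, h, rfl, rfl⟩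
    have hnG : (a, b) ∉ G := fun h =>
      n3' (hgBall_mono (Nat.zero_le _) (mem_hgBall_zero.2 h))
    have : insert (a, b) G ∈ S := by
      simp only [S, Finset.mem_filter, Finset.mem_powerset]
      refine ⟨Finset.insert_subset hab hGR, highGirth_insert hGg n3', ?_, ?_, ?_⟩
      · intro a'
        rw [Finset.filter_insert]
        split_ifs with h
        · simp only at h
          subst h
          have := hd1 a
          exact (Finset.card_insert_le _ _).trans (by omega)
        · exact hd1 a'
      · intro b'
        rw [Finset.filter_insert]
        split_ifs with h
        · simp only at h
          subst h
          have := hd2 b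
          exact (Finset.card_insert_le _ _).trans (by omega)
        · exact hd2 b'
      · rw [Finset.card_insert_of_notMem hnG]
        omega
    have := hmax _ this
    rw [Finset.card_insert_of_notMem hnG] at this
    omega
  have hSA : SA.card * D ≤ G.card := by
    rw [Finset.card_eq_sum_card_fiberwise (f := Prod.fst) (t := Finset.univ) (by simp [Set.MapsTo])]
    calc SA.card * D = ∑ a ∈ SA, (G.filter (fun p => p.1 = a)).card := by
          rw [Finset.sum_congr rfl (fun a ha => (Finset.mem_filter.1 ha).2)]
          simp [SA]
      _ ≤ _ := Finset.sum_le_sum_of_subset (Finset.subset_univ _)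
  have hSB : SB.card * D ≤ G.card := by
    rw [Finset.card_eq_sum_card_fiberwise (f := Prod.snd) (t := Finset.univ) (by simp [Set.MapsTo])]
    calc SB.card * D = ∑ a ∈ SB, (G.filter (fun p => p.2 = a)).card := by
          rw [Finset.sum_congr rfl (fun a ha => (Finset.mem_filter.1 ha).2)]
          simp [SB]
      _ ≤ _ := Finset.sum_le_sum_of_subset (Finset.subset_univ _)
  have hNR : NR.card ≤ n * D ^ (2 * k) := by
    refine (Finset.card_biUnion_le_card_mul _ _ (D ^ (2 * k)) fun b _ => ?_).trans (by simp)
    refine Finset.card_image_le.trans ((hgBall_card hd1 hd2 b _).trans ?_)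
    exact Nat.pow_le_pow_right hD (by omega)
  have hcard : R.card ≤ SA.card * n + n * SB.card + NR.card := by
    refine (Finset.card_le_card hcov).trans ((Finset.card_union_le _ _).trans ?_)
    refine Nat.add_le_add_right ((Finset.card_union_le _ _).trans ?_) _
    simp
  have : D * R.card ≤ 2 * k * n ^ 2 + n * D ^ (2 * k + 1) := by
    calc D * R.card ≤ D * (SA.card * n + n * SB.card + NR.card) := Nat.mul_le_mul_left _ hcard
      _ = (SA.card * D) * n + (SB.card * D) * n + D * NR.card := by ring
      _ ≤ (k * n) * n + (k * n) * n + D * (n * D ^ (2 * k)) :=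
          Nat.add_le_add (Nat.add_le_add (Nat.mul_le_mul_right _ (hSA.trans hc))
            (Nat.mul_le_mul_right _ (hSB.trans hc))) (Nat.mul_le_mul_left _ hNR)
      _ = _ := by ring
  omega

lemma highGirth_family {n k D s : ℕ} (hk : 0 < k) (hD : 0 < D)
    (hs : 2 * k * n ^ 2 + n * D ^ (2 * k + 1) < D * s) (C : ℕ) (hC : C * (k * n) + s ≤ n ^ 2 + k * n) :
    ∃ G : ℕ → Finset (Fin n × Fin n), (∀ c < C, (G c).card = k * n ∧ HighGirth (G c) k) ∧
      ∀ c < C, ∀ d < c, Disjoint (G c) (G d) := by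
  classical
  induction C with
  | zero => exact ⟨fun _ => ∅, by simp, by simp⟩
  | succ C ih =>
    obtain ⟨G, hG, hdis⟩ := ih (by rw [add_mul] at hC; omega)
    let R : Finset (Fin n × Fin n) := Finset.univ \ (Finset.range C).biUnion G
    have hRc : s ≤ R.card := by
      have h1 : ((Finset.range C).biUnion G).card ≤ C * (k * n) := by
        refine (Finset.card_biUnion_le_card_mul _ _ (k * n) fun c hc => ?_).trans (by simp)
        exact (hG c (Finset.mem_range.1 hc)).1.le
      have h2 : R.card = n ^ 2 - ((Finset.range C).biUnion G).card := by
        rw [Finset.card_sdiff_of_subset (Finset.subset_univ _)]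
        simp [sq]
      rw [add_mul] at hC
      omega
    obtain ⟨G', hG'R, hG'c, hG'g⟩ := highGirth_exists hk R hD
      (hs.trans_le (Nat.mul_le_mul_left _ hRc))
    refine ⟨fun c => if c < C then G c else G', ?_, ?_⟩
    · intro c hc
      by_cases h : c < C
      · simpa [h] using hG c h
      · simp [h, hG'c, hG'g]
    · intro c hc d hd
      by_cases h : c < C
      · have h' : d < C := by omega
        simpa [h, h'] using hdis c h d hd
      · have h' : d < C := by omega
        simp only [h, h', if_true, if_false]
        rw [Finset.disjoint_left]
        intro p hp hpd
        have := hG'R hp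
        simp only [R, Finset.mem_sdiff, Finset.mem_biUnion, Finset.mem_range, not_exists] at this
        exact this.2 d ⟨h', hpd⟩

section Hyper

/-- the vertex set of the construction -/
abbrev HV (C k n : ℕ) : Type := (Fin C × Fin k) ⊕ (Fin n ⊕ Fin n)

/-- one hyperedge of the construction -/
def hEdge {C k n : ℕ} (q : (Fin C × Fin k) × (Fin n × Fin n)) : Finset (HV C k n) :=
  {Sum.inl q.1, Sum.inr (Sum.inl q.2.1), Sum.inr (Sum.inr q.2.2)}

/-- the hyperedges of the construction -/
def hEdges {C k n : ℕ} (G : Fin C → Finset (Fin n × Fin n)) : Finset (Finset (HV C k n)) :=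
  (Finset.univ.filter fun q : (Fin C × Fin k) × (Fin n × Fin n) => q.2 ∈ G q.1.1).image hEdge

/-- the class of a vertex -/
def hCol {C k n : ℕ} : HV C k n → ZMod 3
  | Sum.inl _ => 0
  | Sum.inr (Sum.inl _) => 1
  | Sum.inr (Sum.inr _) => 2

variable {C k n : ℕ}

lemma hEdges_mem {G : Fin C → Finset (Fin n × Fin n)} {e : Finset (HV C k n)}
    (he : e ∈ hEdges G) {x : Fin C × Fin k} {a b : Fin n} (hx : Sum.inl x ∈ e)
    (ha : Sum.inr (Sum.inl a) ∈ e) (hb : Sum.inr (Sum.inr b) ∈ e) : (a, b) ∈ G x.1 := by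
  simp only [hEdges, Finset.mem_image, Finset.mem_filter, Finset.mem_univ, true_and] at he
  obtain ⟨⟨x', a', b'⟩, h, rfl⟩ := he
  simp [hEdge] at hx ha hb
  subst hx ha hb
  exact h

lemma hEdge_injective : Function.Injective (hEdge (C := C) (k := k) (n := n)) := by
  rintro ⟨x, a, b⟩ ⟨x', a', b'⟩ h
  have h1 : (Sum.inl x : HV C k n) ∈ hEdge (x', a', b') := by rw [← h]; simp [hEdge]
  have h2 : (Sum.inr (Sum.inl a) : HV C k n) ∈ hEdge (x', a', b') := by rw [← h]; simp [hEdge]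
  have h3 : (Sum.inr (Sum.inr b) : HV C k n) ∈ hEdge (x', a', b') := by rw [← h]; simp [hEdge]
  simp [hEdge] at h1 h2 h3
  subst h1 h2 h3
  rfl

lemma hEdges_card {G : Fin C → Finset (Fin n × Fin n)} {M : ℕ} (hG : ∀ c, (G c).card = M) :
    (hEdges (k := k) G).card = C * k * M := by
  rw [hEdges, Finset.card_image_of_injective _ hEdge_injective]
  have : (Finset.univ.filter fun q : (Fin C × Fin k) × (Fin n × Fin n) => q.2 ∈ G q.1.1)
      = (Finset.univ : Finset (Fin C × Fin k)).biUnion fun x => (G x.1).image fun p => (x, p) := by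
    ext ⟨x, p⟩
    simp
  rw [this, Finset.card_biUnion]
  · rw [Finset.sum_congr rfl (g := fun _ => M)]
    · simp
    · intro x _
      rw [Finset.card_image_of_injective _ (Prod.mk_right_injective x), hG]
  · intro x _ x' _ hne
    rw [Function.onFun, Finset.disjoint_left]
    intro q hq hq'
    simp only [Finset.mem_image] at hq hq'
    obtain ⟨p, _, rfl⟩ := hq
    obtain ⟨p', _, h⟩ := hq'
    exact hne (Prod.mk.inj h).1.symm

lemma zmod3_aux : ∀ p q r : ZMod 3, ({p, q, r} : Finset (ZMod 3)) = {0, 1, 2} →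
    r - q = q - p ∧ q - p ≠ 0 := by decide

lemma hEdges_col {G : Fin C → Finset (Fin n × Fin n)} {u v w : HV C k n}
    (he : ({u, v, w} : Finset (HV C k n)) ∈ hEdges G) :
    hCol w - hCol v = hCol v - hCol u ∧ hCol v - hCol u ≠ 0 := by
  apply zmod3_aux
  simp only [hEdges, Finset.mem_image, Finset.mem_filter, Finset.mem_univ, true_and] at he
  obtain ⟨⟨x', a', b'⟩, _, h⟩ := he
  have := congrArg (Finset.image hCol) h
  simp only [hEdge, Finset.image_insert, Finset.image_singleton] at this
  rw [← this]
  rfl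

lemma hyper_core {G : Fin C → Finset (Fin n × Fin n)} (hg : ∀ c, HighGirth (G c) k)
    (hdis : ∀ c d, c ≠ d → Disjoint (G c) (G d)) (ℓ : ℕ) (hl : 3 < ℓ) (v : ZMod ℓ → HV C k n)
    (hv : Function.Injective v) (hE : ∀ i, ({v i, v (i + 1), v (i + 2)} : Finset _) ∈ hEdges G)
    (h0 : hCol (v 0) = 0) (h1 : ∀ i, hCol (v (i + 1)) = hCol (v i) + 1) : False := by
  have hnat : ∀ j : ℕ, hCol (v (j : ZMod ℓ)) = (j : ZMod 3) := by
    intro j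
    induction j with
    | zero => simpa using h0
    | succ j ih => push_cast; rw [h1, ih]
  have h3 : 3 ∣ ℓ := by
    rw [← ZMod.natCast_eq_zero_iff, ← hnat, ZMod.natCast_self, h0]
  obtain ⟨p, rfl⟩ := h3
  have hp : 2 ≤ p := by omega
  have : NeZero p := ⟨by omega⟩
  let f : {f : ℤ →+ ZMod (3 * p) // f p = 0} := ⟨zmultiplesHom _ (3 : ZMod (3 * p)), by
    have := ZMod.natCast_self (3 * p)
    push_cast at this
    simpa [mul_comm] using this⟩
  let φ : ZMod p →+ ZMod (3 * p) := ZMod.lift p f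
  have hφinj : Function.Injective φ := by
    refine (ZMod.lift_injective p).2 fun m hm => ?_
    have hm' : ((m * 3 : ℤ) : ZMod (3 * p)) = 0 := by
      have : (m : ZMod (3 * p)) * 3 = 0 := by simpa [f] using hm
      push_cast
      exact this
    rw [ZMod.intCast_zmod_eq_zero_iff_dvd] at hm' ⊢
    push_cast at hm'
    obtain ⟨c, hc⟩ := hm'
    exact ⟨c, by linarith⟩
  have hφ : ∀ s : ℕ, φ (s : ZMod p) = ((3 * s : ℕ) : ZMod (3 * p)) := by
    intro s
    have := ZMod.lift_coe p f (s : ℤ)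
    simp only [Int.cast_natCast] at this
    rw [show φ (s : ZMod p) = _ from this]
    simp [f, mul_comm]
  have hφ1 : ∀ t, φ (t + 1) = φ t + 3 := by
    intro t
    have := hφ 1
    rw [map_add]
    simpa using this
  have hc0 : ∀ t, hCol (v (φ t)) = 0 := by
    intro t
    obtain ⟨s, rfl⟩ := ZMod.natCast_zmod_surjective t
    rw [hφ, hnat, ZMod.natCast_eq_zero_iff]
    exact ⟨s, rfl⟩
  have hc1 : ∀ t, hCol (v (φ t + 1)) = 1 := by
    intro t
    rw [h1, hc0]
    rfl
  have hc2 : ∀ t, hCol (v (φ t + 2)) = 2 := by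
    intro t
    rw [show φ t + 2 = φ t + 1 + 1 by ring, h1, hc1]
    rfl
  have ex : ∀ t, ∃ x, v (φ t) = Sum.inl x := by
    intro t
    have := hc0 t
    rcases h : v (φ t) with x | a | b
    · exact ⟨x, rfl⟩
    · rw [h] at this; exact absurd this (by decide : (1 : ZMod 3) ≠ 0)
    · rw [h] at this; exact absurd this (by decide : (2 : ZMod 3) ≠ 0)
  have ey : ∀ t, ∃ x, v (φ t + 1) = Sum.inr (Sum.inl x) := by
    intro t
    have := hc1 t
    rcases h : v (φ t + 1) with x | a | b
    · rw [h] at this; exact absurd this (by decide : (0 : ZMod 3) ≠ 1)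
    · exact ⟨a, rfl⟩
    · rw [h] at this; exact absurd this (by decide : (2 : ZMod 3) ≠ 1)
  have ez : ∀ t, ∃ x, v (φ t + 2) = Sum.inr (Sum.inr x) := by
    intro t
    have := hc2 t
    rcases h : v (φ t + 2) with x | a | b
    · rw [h] at this; exact absurd this (by decide : (0 : ZMod 3) ≠ 2)
    · rw [h] at this; exact absurd this (by decide : (1 : ZMod 3) ≠ 2)
    · exact ⟨b, rfl⟩
  choose x hx using ex
  choose y hy using ey
  choose z hz using ez
  have e1 : ∀ t, (y t, z t) ∈ G (x t).1 := by
    intro t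
    have := hE (φ t)
    rw [hx, hy, hz] at this
    exact hEdges_mem this (by simp) (by simp) (by simp)
  have e2 : ∀ t, (y t, z t) ∈ G (x (t + 1)).1 := by
    intro t
    have := hE (φ t + 1)
    rw [show φ t + 1 + 1 = φ t + 2 by ring, show φ t + 1 + 2 = φ (t + 1) by rw [hφ1]; ring,
      hx, hy, hz] at this
    exact hEdges_mem this (by simp) (by simp) (by simp)
  have e3 : ∀ t, (y (t + 1), z t) ∈ G (x (t + 1)).1 := by
    intro t
    have := hE (φ t + 2)
    rw [show φ t + 2 + 1 = φ (t + 1) by rw [hφ1]; ring,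
      show φ t + 2 + 2 = φ (t + 1) + 1 by rw [hφ1]; ring, hx, hy, hz] at this
    exact hEdges_mem this (by simp) (by simp) (by simp)
  have hstep : ∀ t, (x (t + 1)).1 = (x t).1 := by
    intro t
    by_contra hne
    exact Finset.disjoint_left.1 (hdis _ _ hne) (e2 t) (e1 t)
  have hconst : ∀ t, (x t).1 = (x 0).1 := by
    intro t
    obtain ⟨s, rfl⟩ := ZMod.natCast_zmod_surjective t
    induction s with
    | zero => simp
    | succ s ih => push_cast; rw [hstep, ih]
  have hpk : p ≤ k := by
    have hinj : Function.Injective fun t => (x t).2 := by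
      intro t t' h
      have hxx : x t = x t' := Prod.ext ((hconst t).trans (hconst t').symm) h
      exact hφinj (hv (by rw [hx, hx, hxx]))
    have := Fintype.card_le_of_injective _ hinj
    simpa [ZMod.card] using this
  refine hg (x 0).1 p hp hpk y z ?_ ?_ fun t => ⟨?_, ?_⟩
  · intro t t' h
    have := hv (show v (φ t + 1) = v (φ t' + 1) by rw [hy, hy, h])
    exact hφinj (by simpa using this)
  · intro t t' h
    have := hv (show v (φ t + 2) = v (φ t' + 2) by rw [hz, hz, h])
    exact hφinj (by simpa using this)
  · rw [← hconst t]; exact e1 t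
  · rw [← hconst (t + 1)]; exact e3 t

lemma tightWindow_three {V : Type*} [DecidableEq V] {ℓ : ℕ} (v : ZMod ℓ → V) (i : ZMod ℓ) :
    tightWindow 3 v i = {v i, v (i + 1), v (i + 2)} := by
  ext a
  simp [tightWindow, Fin.exists_fin_succ, eq_comm, one_add_one_eq_two]

lemma hyper_core_shift {G : Fin C → Finset (Fin n × Fin n)} (hg : ∀ c, HighGirth (G c) k)
    (hdis : ∀ c d, c ≠ d → Disjoint (G c) (G d)) (ℓ : ℕ) (hl : 3 < ℓ) (v : ZMod ℓ → HV C k n)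
    (hv : Function.Injective v) (hE : ∀ i, ({v i, v (i + 1), v (i + 2)} : Finset _) ∈ hEdges G)
    (h1 : ∀ i, hCol (v (i + 1)) = hCol (v i) + 1) : False := by
  have hnat : ∀ j : ℕ, hCol (v (j : ZMod ℓ)) = hCol (v 0) + (j : ZMod 3) := by
    intro j
    induction j with
    | zero => simp
    | succ j ih => push_cast; rw [h1, ih]; ring
  obtain ⟨j, hj⟩ := ZMod.natCast_zmod_surjective (-hCol (v 0))
  refine hyper_core hg hdis ℓ hl (fun i => v (i + j)) ?_ ?_ ?_ ?_
  · intro i i' h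
    simpa using hv h
  · intro i
    have := hE (i + j)
    rwa [show i + (j : ZMod ℓ) + 1 = i + 1 + j by ring,
      show i + (j : ZMod ℓ) + 2 = i + 2 + j by ring] at this
  · rw [zero_add, hnat, hj]
    ring
  · intro i
    rw [show i + 1 + (j : ZMod ℓ) = i + j + 1 by ring, h1]

lemma hyper_free {G : Fin C → Finset (Fin n × Fin n)} (hg : ∀ c, HighGirth (G c) k)
    (hdis : ∀ c d, c ≠ d → Disjoint (G c) (G d)) :
    TightCycleFree 3 ((hEdges G : Finset (Finset (HV C k n))) : Set (Finset (HV C k n))) := by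
  rintro ⟨ℓ, hl, v, hv, hE⟩
  simp only [tightWindow_three, Finset.mem_coe] at hE
  have : NeZero ℓ := ⟨by omega⟩
  have hd : ∀ i, hCol (v (i + 1)) - hCol (v i) = hCol (v 1) - hCol (v 0) := by
    intro i
    obtain ⟨s, rfl⟩ := ZMod.natCast_zmod_surjective i
    induction s with
    | zero => simp
    | succ s ih =>
      rw [← ih]
      have := (hEdges_col (hE s)).1
      rw [← this]
      push_cast
      rw [show (s : ZMod ℓ) + 1 + 1 = s + 2 by ring]
  have hne : hCol (v 1) - hCol (v 0) ≠ 0 := by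
    simpa using (hEdges_col (hE 0)).2
  have hcases : ∀ d : ZMod 3, d ≠ 0 → d = 1 ∨ d = 2 := by decide
  rcases hcases _ hne with h | h
  · refine hyper_core_shift hg hdis ℓ hl v hv hE fun i => ?_
    rw [← h, ← hd i]
    ring
  · refine hyper_core_shift hg hdis ℓ hl (fun i => v (-i)) ?_ ?_ fun i => ?_
    · intro i i' h
      simpa using hv h
    · intro i
      have := hE (-i - 2)
      rw [show -i - 2 + 1 = -(i + 1) by ring, show -i - 2 + 2 = -i by ring,
        show -i - 2 = -(i + 2) by ring] at this
      convert this using 1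
      ext a
      simp only [Finset.mem_insert, Finset.mem_singleton]
      tauto
    · have := hd (-(i + 1))
      rw [show -(i + 1) + 1 = -i by ring, h] at this
      have h3 : (3 : ZMod 3) = 0 := by decide
      linear_combination -this - h3

end Hyper

lemma tightCycleFree_image {V W : Type*} [DecidableEq V] [DecidableEq W] (f : V → W)
    (hf : Function.Injective f) (E : Finset (Finset V))
    (hE : TightCycleFree 3 (E : Set (Finset V))) :
    TightCycleFree 3 ((E.image (Finset.image f) : Finset (Finset W)) : Set (Finset W)) := by
  rintro ⟨ℓ, hl, v, hv, h⟩
  simp only [tightWindow_three, Finset.coe_image, Set.mem_image, Finset.mem_coe] at h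
  have hex : ∀ i, ∃ u, f u = v i := by
    intro i
    obtain ⟨e, _, he⟩ := h i
    have : v i ∈ Finset.image f e := by rw [he]; simp
    obtain ⟨u, _, hu⟩ := Finset.mem_image.1 this
    exact ⟨u, hu⟩
  choose u hu using hex
  refine hE ⟨ℓ, hl, u, ?_, ?_⟩
  · intro i j hij
    apply hv
    rw [← hu, ← hu, hij]
  · intro i
    obtain ⟨e, heE, he⟩ := h i
    rw [tightWindow_three]
    have : Finset.image f e = Finset.image f {u i, u (i + 1), u (i + 2)} := by
      rw [he]
      simp [hu]
    rw [← Finset.image_injective hf this]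
    exact heE

lemma comb_main {n k : ℕ} {δ : ℝ} (hδ : 0 < δ) (hδ4 : δ ≤ 1 / 4) (hk : 0 < k)
    (hpow : (3 * (k : ℝ) / δ) ^ (2 * k) < δ * n) :
    ∃ m : ℕ, m ≤ 3 * n ∧
        ∃ X Y Z : Finset (Fin m), Disjoint X Y ∧ Disjoint X Z ∧ Disjoint Y Z ∧
          X ∪ Y ∪ Z = Finset.univ ∧
          ∃ E : Finset (Finset (Fin m)),
            (∀ e ∈ E, ∃ x ∈ X, ∃ y ∈ Y, ∃ z ∈ Z, e = {x, y, z}) ∧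
            TightCycleFree 3 (E : Set (Finset (Fin m))) ∧
            (1 - 3 * δ) * (k : ℝ) * (n : ℝ) ^ 2 ≤ (E.card : ℝ) := by
  classical
  have hk1 : (1 : ℝ) ≤ k := by exact_mod_cast hk
  have hkδ : (k : ℝ) ≤ k / δ := by
    rw [le_div_iff₀ hδ]
    nlinarith
  have hb1 : 1 ≤ 3 * (k : ℝ) / δ := by
    rw [mul_div_assoc]
    linarith
  have hkn : (k : ℝ) ≤ δ * n := by
    have h1 : 3 * (k : ℝ) / δ ≤ (3 * (k : ℝ) / δ) ^ (2 * k) := le_self_pow₀ hb1 (by omega)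
    rw [mul_div_assoc] at h1 hpow
    linarith
  have hn : (0 : ℝ) < n := by
    by_contra h
    have h0 : (n : ℝ) ≤ 0 := not_lt.1 h
    nlinarith
  set D : ℕ := ⌈2 * (k : ℝ) / δ⌉₊ with hDdef
  have hD1 : 2 * (k : ℝ) / δ ≤ D := Nat.le_ceil _
  have hD2 : (D : ℝ) < 2 * (k : ℝ) / δ + 1 := Nat.ceil_lt_add_one (by positivity)
  have hD3 : (D : ℝ) ≤ 3 * (k : ℝ) / δ := by
    rw [mul_div_assoc] at hD2 ⊢
    linarith
  have hD4 : 2 * (k : ℝ) ≤ δ * D := by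
    rw [div_le_iff₀ hδ] at hD1
    linarith
  have hDpos : (0 : ℝ) < D := by
    by_contra h
    have h0 : (D : ℝ) ≤ 0 := not_lt.1 h
    nlinarith
  have hDpow : (D : ℝ) ^ (2 * k) < δ * n := (pow_le_pow_left₀ hDpos.le hD3 _).trans_lt hpow
  set C : ℕ := ⌊(1 - 2 * δ) * n / k⌋₊ with hCdef
  have hC1 : (C : ℝ) * k ≤ (1 - 2 * δ) * n := by
    rw [← le_div_iff₀ (by linarith)]
    exact Nat.floor_le (div_nonneg (mul_nonneg (by linarith) hn.le) (by linarith))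
  have hC2 : (1 - 2 * δ) * n < ((C : ℝ) + 1) * k := by
    rw [← div_lt_iff₀ (by linarith)]
    exact Nat.lt_floor_add_one _
  have hCn : C * k ≤ n := by
    have : (C : ℝ) * k ≤ n := by nlinarith
    exact_mod_cast this
  have hCn2 : C * (k * n) ≤ n ^ 2 := by
    calc C * (k * n) = C * k * n := by ring
      _ ≤ n * n := Nat.mul_le_mul_right _ hCn
      _ = n ^ 2 := by ring
  have hsR : ((n ^ 2 - C * (k * n) : ℕ) : ℝ) = (n : ℝ) ^ 2 - C * (k * n) := by
    rw [Nat.cast_sub hCn2]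
    push_cast
    ring
  have hs2 : 2 * δ * (n : ℝ) ^ 2 ≤ ((n ^ 2 - C * (k * n) : ℕ) : ℝ) := by
    rw [hsR]
    nlinarith
  have hs : 2 * k * n ^ 2 + n * D ^ (2 * k + 1) < D * (n ^ 2 - C * (k * n)) := by
    have : 2 * (k : ℝ) * (n : ℝ) ^ 2 + n * (D : ℝ) ^ (2 * k + 1)
        < D * ((n ^ 2 - C * (k * n) : ℕ) : ℝ) := by
      have e1 : 2 * (k : ℝ) * (n : ℝ) ^ 2 ≤ δ * D * (n : ℝ) ^ 2 :=
        mul_le_mul_of_nonneg_right hD4 (by positivity)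
      have e2 : n * (D : ℝ) ^ (2 * k + 1) < n * D * (δ * n) := by
        calc n * (D : ℝ) ^ (2 * k + 1) = n * D * (D : ℝ) ^ (2 * k) := by ring
          _ < _ := mul_lt_mul_of_pos_left hDpow (by positivity)
      have e3 := mul_le_mul_of_nonneg_left hs2 hDpos.le
      linarith
    exact_mod_cast this
  obtain ⟨G₀, hG, hdis⟩ := highGirth_family hk (by exact_mod_cast hDpos) hs C (by omega)
  let G : Fin C → Finset (Fin n × Fin n) := fun c => G₀ c
  have hGd : ∀ c d, c ≠ d → Disjoint (G c) (G d) := by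
    intro c d hne
    rcases lt_or_gt_of_ne (fun h => hne (Fin.ext h) : (c : ℕ) ≠ d) with h | h
    · exact (hdis d d.2 c h).symm
    · exact hdis c c.2 d h
  have hfree : TightCycleFree 3 ((hEdges G : Finset (Finset (HV C k n))) : Set (Finset (HV C k n))) :=
    hyper_free (fun c => (hG c c.2).2) hGd
  have hcard : (hEdges (k := k) G).card = C * k * (k * n) := hEdges_card fun c => (hG c c.2).1
  have hm : Fintype.card (HV C k n) = C * k + (n + n) := by simp
  let f : HV C k n ≃ Fin (C * k + (n + n)) := Fintype.equivFinOfCardEq hm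
  have hinj : Function.Injective f := f.injective
  refine ⟨C * k + (n + n), by omega,
    (Finset.univ : Finset (Fin C × Fin k)).image (fun x => f (Sum.inl x)),
    (Finset.univ : Finset (Fin n)).image (fun x => f (Sum.inr (Sum.inl x))),
    (Finset.univ : Finset (Fin n)).image (fun x => f (Sum.inr (Sum.inr x))), ?_, ?_, ?_, ?_,
    (hEdges (k := k) G).image (Finset.image f), ?_, ?_, ?_⟩
  · rw [Finset.disjoint_left]
    intro a ha hb
    simp only [Finset.mem_image, Finset.mem_univ, true_and] at ha hb
    obtain ⟨x, rfl⟩ := ha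
    obtain ⟨y, hy⟩ := hb
    simpa using hinj hy
  · rw [Finset.disjoint_left]
    intro a ha hb
    simp only [Finset.mem_image, Finset.mem_univ, true_and] at ha hb
    obtain ⟨x, rfl⟩ := ha
    obtain ⟨y, hy⟩ := hb
    simpa using hinj hy
  · rw [Finset.disjoint_left]
    intro a ha hb
    simp only [Finset.mem_image, Finset.mem_univ, true_and] at ha hb
    obtain ⟨x, rfl⟩ := ha
    obtain ⟨y, hy⟩ := hb
    simpa using hinj hy
  · rw [Finset.eq_univ_iff_forall]
    intro a
    obtain ⟨u, rfl⟩ := f.surjective a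
    rcases u with x | y | z <;> simp
  · intro e he
    obtain ⟨e', he', rfl⟩ := Finset.mem_image.1 he
    simp only [hEdges, Finset.mem_image, Finset.mem_filter, Finset.mem_univ, true_and] at he'
    obtain ⟨⟨x, a, b⟩, _, rfl⟩ := he'
    refine ⟨f (Sum.inl x), by simp, f (Sum.inr (Sum.inl a)), by simp,
      f (Sum.inr (Sum.inr b)), by simp, ?_⟩
    simp [hEdge]
  · exact tightCycleFree_image f hinj _ hfree
  · rw [Finset.card_image_of_injective _ (Finset.image_injective hinj), hcard]
    push_cast
    have e1 : (1 - 3 * δ) * n ≤ (C : ℝ) * k := by nlinarith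
    have e2 := mul_le_mul_of_nonneg_right e1 (by positivity : (0 : ℝ) ≤ k * n)
    nlinarith

lemma tendsto_loglog : Filter.Tendsto (fun n : ℕ => Real.log (Real.log n)) Filter.atTop Filter.atTop :=
  Real.tendsto_log_atTop.comp (Real.tendsto_log_atTop.comp tendsto_natCast_atTop_atTop)

lemma tendsto_logn : Filter.Tendsto (fun n : ℕ => Real.log (n : ℝ)) Filter.atTop Filter.atTop :=
  Real.tendsto_log_atTop.comp tendsto_natCast_atTop_atTop

lemma analytic_main {δ : ℝ} (hδ : 0 < δ) : ∃ N : ℕ, ∀ n : ℕ, N ≤ n → ∀ k : ℕ, 0 < k →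
    (k : ℝ) ≤ 1 / 8 * Real.log n / Real.log (Real.log n) →
    (3 * (k : ℝ) / δ) ^ (2 * k) < δ * n := by
  have ev := (tendsto_loglog.eventually_ge_atTop 1).and
    ((tendsto_logn.eventually_ge_atTop (3 / δ)).and
      ((tendsto_logn.eventually_gt_atTop (-2 * Real.log δ)).and
        (Filter.eventually_ge_atTop 1)))
  obtain ⟨N, hN⟩ := Filter.eventually_atTop.1 ev
  refine ⟨N, fun n hn k hk hkl => ?_⟩
  obtain ⟨h1, h2, h3, h4⟩ := hN n hn
  have hn0 : (0 : ℝ) < n := by exact_mod_cast h4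
  have hk0 : (0 : ℝ) < k := by exact_mod_cast hk
  set L := Real.log n with hL
  have hLpos : 0 < L := lt_of_lt_of_le (by positivity) h2
  have hkL : (k : ℝ) * Real.log L ≤ 1 / 8 * L := by
    rwa [le_div_iff₀ (by linarith)] at hkl
  have hkL2 : (k : ℝ) ≤ L := by nlinarith
  have hb : 3 * (k : ℝ) / δ ≤ L ^ 2 := by
    calc 3 * (k : ℝ) / δ = (3 / δ) * k := by ring
      _ ≤ L * L := mul_le_mul h2 hkL2 hk0.le hLpos.le
      _ = L ^ 2 := by ring
  have hpos : 0 < 3 * (k : ℝ) / δ := by positivity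
  rw [← Real.log_lt_log_iff (by positivity) (by positivity), Real.log_pow,
    Real.log_mul hδ.ne' hn0.ne', ← hL]
  have hlb : Real.log (3 * (k : ℝ) / δ) ≤ 2 * Real.log L := by
    have := Real.log_le_log hpos hb
    rwa [Real.log_pow] at this
  have : ((2 * k : ℕ) : ℝ) * Real.log (3 * (k : ℝ) / δ) ≤ ((2 * k : ℕ) : ℝ) * (2 * Real.log L) :=
    mul_le_mul_of_nonneg_left hlb (by positivity)
  push_cast at this ⊢
  linarith

lemma part_one : ∀ ε : ℝ, 0 < ε → ∃ α : ℝ, 0 < α ∧ ∃ N : ℕ, ∀ n : ℕ, N ≤ n → ∀ k : ℕ, 0 < k →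
      (k : ℝ) ≤ α * Real.log n / Real.log (Real.log n) →
      ∃ m : ℕ, m ≤ 3 * n ∧
        ∃ X Y Z : Finset (Fin m), Disjoint X Y ∧ Disjoint X Z ∧ Disjoint Y Z ∧
          X ∪ Y ∪ Z = Finset.univ ∧
          ∃ E : Finset (Finset (Fin m)),
            (∀ e ∈ E, ∃ x ∈ X, ∃ y ∈ Y, ∃ z ∈ Z, e = {x, y, z}) ∧
            TightCycleFree 3 (E : Set (Finset (Fin m))) ∧
            (1 - ε) * (k : ℝ) * (n : ℝ) ^ 2 ≤ (E.card : ℝ) := by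
  intro ε hε
  have hδ : 0 < min ε 1 / 4 := by positivity
  have hδ4 : min ε 1 / 4 ≤ 1 / 4 := by
    have := min_le_right ε 1
    linarith
  have hδε : 3 * (min ε 1 / 4) ≤ ε := by
    have := min_le_left ε 1
    linarith
  obtain ⟨N, hN⟩ := analytic_main hδ
  refine ⟨1 / 8, by norm_num, N, fun n hn k hk hkl => ?_⟩
  obtain ⟨m, hm, X, Y, Z, h1, h2, h3, h4, E, h5, h6, h7⟩ := comb_main hδ hδ4 hk (hN n hn k hk hkl)
  refine ⟨m, hm, X, Y, Z, h1, h2, h3, h4, E, h5, h6, le_trans ?_ h7⟩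
  have : (0 : ℝ) ≤ k * (n : ℝ) ^ 2 := by positivity
  nlinarith

lemma turan_ge_s7 {m n : ℕ} (hmn : m ≤ n) (E : Finset (Finset (Fin m)))
    (h3 : ∀ e ∈ E, e.card = 3) (hE : TightCycleFree 3 (E : Set (Finset (Fin m)))) :
    E.card ≤ tightCycleTuran 3 n := by
  have hinj : Function.Injective (Fin.castLE hmn) := Fin.castLE_injective hmn
  refine le_csSup ⟨(Finset.univ : Finset (Finset (Fin n))).card, ?_⟩
    ⟨E.image (Finset.image (Fin.castLE hmn)), ?_, tightCycleFree_image _ hinj E hE, ?_⟩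
  · rintro _ ⟨F, _, _, rfl⟩
    exact Finset.card_le_card (Finset.subset_univ _)
  · intro e he
    obtain ⟨e', he', rfl⟩ := Finset.mem_image.1 he
    rw [Finset.card_image_of_injective _ hinj, h3 _ he']
  · exact Finset.card_image_of_injective _ (Finset.image_injective hinj)

lemma part_two : ∃ c : ℝ, 0 < c ∧ ∃ N : ℕ, ∀ n : ℕ, N ≤ n →
      c * (n : ℝ) ^ 2 * Real.log n / Real.log (Real.log n) ≤
        (tightCycleTuran 3 n : ℝ) := by
  obtain ⟨α, hα, N₁, hN₁⟩ := part_one (1 / 2) (by norm_num)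
  have hdiv : Filter.Tendsto (fun n : ℕ => n / 3) Filter.atTop Filter.atTop :=
    Nat.tendsto_div_const_atTop (by norm_num)
  have hratio : Filter.Tendsto (fun n : ℕ => Real.log n / Real.log (Real.log n))
      Filter.atTop Filter.atTop := by
    have h1 : Filter.Tendsto (fun x : ℝ => x / Real.log x) Filter.atTop Filter.atTop := by
      have h2 : Filter.Tendsto (fun x : ℝ => Real.exp x / x ^ 1) Filter.atTop Filter.atTop :=
        Real.tendsto_exp_div_pow_atTop 1
      refine (h2.comp Real.tendsto_log_atTop).congr' ?_
      filter_upwards [Filter.eventually_gt_atTop 0] with x hx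
      simp [Real.exp_log hx]
    exact h1.comp tendsto_logn
  have ev := (hdiv.eventually_ge_atTop N₁).and ((hdiv.eventually (hratio.eventually_ge_atTop (1 / α))).and
    ((hdiv.eventually (tendsto_loglog.eventually_ge_atTop 1)).and
      ((Filter.eventually_ge_atTop 16).and
        (hdiv.eventually (tendsto_logn.eventually_ge_atTop 1)))))
  obtain ⟨N, hN⟩ := Filter.eventually_atTop.1 ev
  refine ⟨α / 128, by positivity, N, fun n hn => ?_⟩
  obtain ⟨g1, g2, g3, g4, g5⟩ := hN n hn
  set n' := n / 3 with hn'
  have hn'1 : n ≤ 4 * n' := by omega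
  have hn'2 : 3 * n' ≤ n := by omega
  have hn'R : (n : ℝ) ≤ 4 * n' := by exact_mod_cast hn'1
  have hn'R2 : (n' : ℝ) ≤ n := by exact_mod_cast (by omega : n' ≤ n)
  have hn16 : (16 : ℝ) ≤ n := by exact_mod_cast g4
  have hn'pos : (0 : ℝ) < n' := by linarith
  have hlog1 : Real.log n ≤ 2 * Real.log n' := by
    have : (n : ℝ) ≤ (n' : ℝ) ^ 2 := by nlinarith
    have := Real.log_le_log (by linarith) this
    rwa [Real.log_pow] at this
  have hlog2 : Real.log n' ≤ Real.log n := Real.log_le_log hn'pos hn'R2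
  have hll : Real.log (Real.log n') ≤ Real.log (Real.log n) :=
    Real.log_le_log (by linarith) hlog2
  set q := Real.log n' / Real.log (Real.log n') with hq
  have hq1 : 1 ≤ α * q := by
    rw [div_le_iff₀ hα] at g2
    linarith
  have hfl1 : ((⌊α * q⌋₊ : ℕ) : ℝ) ≤ α * q := Nat.floor_le (by linarith)
  have hfl2 : α * q < (⌊α * q⌋₊ : ℕ) + 1 := Nat.lt_floor_add_one _
  have hk : 0 < ⌊α * q⌋₊ := Nat.floor_pos.2 hq1
  have hkR : (1 : ℝ) ≤ (⌊α * q⌋₊ : ℕ) := by exact_mod_cast hk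
  obtain ⟨m, hm, X, Y, Z, hXY, hXZ, hYZ, _, E, hE3, hEf, hEc⟩ := hN₁ n' g1 ⌊α * q⌋₊ hk
    (by rw [mul_div_assoc]; exact hfl1)
  have hcard3 : ∀ e ∈ E, e.card = 3 := by
    intro e he
    obtain ⟨x, hx, y, hy, z, hz, rfl⟩ := hE3 e he
    rw [Finset.card_eq_three]
    refine ⟨x, y, z, ?_, ?_, ?_, rfl⟩
    · rintro rfl; exact Finset.disjoint_left.1 hXY hx hy
    · rintro rfl; exact Finset.disjoint_left.1 hXZ hx hz
    · rintro rfl; exact Finset.disjoint_left.1 hYZ hy hz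
  have hT : (E.card : ℝ) ≤ tightCycleTuran 3 n := by
    exact_mod_cast turan_ge_s7 (hm.trans hn'2) E hcard3 hEf
  refine le_trans ?_ (hEc.trans hT)
  have hqn : Real.log n / Real.log (Real.log n) ≤ 2 * q := by
    rw [hq, ← mul_div_assoc]
    exact div_le_div₀ (by linarith) hlog1 (by linarith) hll
  have hq0 : 0 < q := by
    by_contra h
    nlinarith
  have hnsq : (n : ℝ) ^ 2 ≤ 16 * (n' : ℝ) ^ 2 := by nlinarith
  calc α / 128 * (n : ℝ) ^ 2 * Real.log n / Real.log (Real.log n)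
      = α / 128 * (n : ℝ) ^ 2 * (Real.log n / Real.log (Real.log n)) := by ring
    _ ≤ α / 128 * (n : ℝ) ^ 2 * (2 * q) := mul_le_mul_of_nonneg_left hqn (by positivity)
    _ = α * q / 64 * (n : ℝ) ^ 2 := by ring
    _ ≤ α * q / 64 * (16 * (n' : ℝ) ^ 2) := mul_le_mul_of_nonneg_left hnsq (by positivity)
    _ = (α * q / 4) * (n' : ℝ) ^ 2 := by ring
    _ ≤ ((1 - 1 / 2) * (⌊α * q⌋₊ : ℕ)) * (n' : ℝ) ^ 2 :=
        mul_le_mul_of_nonneg_right (by linarith) (by positivity)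


/-- The case `r = 3`: for `k ≤ α log n / log log n` there is a tight-cycle-free
3-partite 3-uniform hypergraph on at most `3n` vertices with at least `(1-ε) k n²`
hyperedges; consequently `f₃(n) = Ω(n² log n / log log n)`. -/
theorem three_uniform_lower_bound :
    (∀ ε : ℝ, 0 < ε → ∃ α : ℝ, 0 < α ∧ ∃ N : ℕ, ∀ n : ℕ, N ≤ n → ∀ k : ℕ, 0 < k →
      (k : ℝ) ≤ α * Real.log n / Real.log (Real.log n) →
      ∃ m : ℕ, m ≤ 3 * n ∧
        ∃ X Y Z : Finset (Fin m), Disjoint X Y ∧ Disjoint X Z ∧ Disjoint Y Z ∧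
          X ∪ Y ∪ Z = Finset.univ ∧
          ∃ E : Finset (Finset (Fin m)),
            (∀ e ∈ E, ∃ x ∈ X, ∃ y ∈ Y, ∃ z ∈ Z, e = {x, y, z}) ∧
            TightCycleFree 3 (E : Set (Finset (Fin m))) ∧
            (1 - ε) * (k : ℝ) * (n : ℝ) ^ 2 ≤ (E.card : ℝ)) ∧
    (∃ c : ℝ, 0 < c ∧ ∃ N : ℕ, ∀ n : ℕ, N ≤ n →
      c * (n : ℝ) ^ 2 * Real.log n / Real.log (Real.log n) ≤
        (tightCycleTuran 3 n : ℝ)) := by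
  exact ⟨part_one, part_two⟩
end

section
/- Let r ≥ 4 and let H be an (r−1)-uniform tight-cycle-free hypergraph on a vertex set V(H) of size n. Form the r-uniform hypergraph H' whose vertex set is the disjoint union of V(H) and [n] = {1, …, n}, and whose edges are all sets e ∪ {i} with e ∈ E(H) and i ∈ [n]. Then H' is tight-cycle-free and has exactly n · |E(H)| edges. -/
lemma cone_pattern (r : ℕ) (hr : 4 ≤ r) (P : ℕ → Prop) (h0 : P 0)
    (hex : ∀ k, ∃ j < r, P (k + j))
    (huniq : ∀ k, ∀ j < r, ∀ j' < r, P (k + j) → P (k + j') → j = j') :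
    ∀ k, P k ↔ r ∣ k := by
  have hno : ∀ k, P k → ∀ j < r, 0 < j → ¬ P (k + j) := by
    intro k hk j hj hj0 hP
    have := huniq k j hj 0 (by omega) hP (by simpa using hk)
    omega
  have hnext : ∀ k, P k → P (k + r) := by
    intro k hk
    obtain ⟨j, hj, hP⟩ := hex (k + 1)
    by_cases h : j + 1 < r
    · exact absurd (by rwa [add_assoc, add_comm 1 j] at hP) (hno k hk (j + 1) h (by omega))
    · have : k + 1 + j = k + r := by omega
      rwa [this] at hP
  have hmul : ∀ q, P (r * q) := by
    intro q
    induction q with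
    | zero => simpa using h0
    | succ q ih => rw [Nat.mul_succ]; exact hnext _ ih
  intro k
  constructor
  · intro hk
    by_contra hd
    have h1 := Nat.div_add_mod k r
    have h2 : k % r < r := Nat.mod_lt _ (by omega)
    have h3 : 0 < k % r := by
      rcases Nat.eq_zero_or_pos (k % r) with h | h
      · exact absurd (Nat.dvd_of_mod_eq_zero h) hd
      · exact h
    have := hno _ (hmul (k / r)) _ h2 h3
    rw [h1] at this
    exact this hk
  · rintro ⟨q, rfl⟩
    exact hmul q

lemma cone_free {A : Type*} [DecidableEq A] (r n : ℕ) (hr : 4 ≤ r)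
    (H : Finset (Finset A))
    (hfree : TightCycleFree (r - 1) (H : Set (Finset A)))
    (E : Set (Finset (A ⊕ Fin n)))
    (hE : ∀ f ∈ E, ∃ e ∈ H, ∃ i : Fin n, f = e.image Sum.inl ∪ {Sum.inr i}) :
    TightCycleFree r E := by
  rintro ⟨ℓ, hℓ, v, hv, hw⟩
  apply hfree
  have hwin : ∀ x : ZMod ℓ, ∃ e ∈ H, ∃ i : Fin n,
      (∀ a, a ∈ e ↔ ∃ j < r, v (x + (j : ℕ)) = Sum.inl a) ∧
      (∀ b, b = i ↔ ∃ j < r, v (x + (j : ℕ)) = Sum.inr b) := by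
    intro x
    obtain ⟨e, he, i, h⟩ := hE _ (hw x)
    refine ⟨e, he, i, fun a => ?_, fun b => ?_⟩
    · have : Sum.inl a ∈ tightWindow r v x ↔ a ∈ e := by rw [h]; simp
      rw [← this]
      simp [tightWindow, Fin.exists_iff]
    · have : Sum.inr b ∈ tightWindow r v x ↔ b = i := by rw [h]; simp
      rw [← this]
      simp [tightWindow, Fin.exists_iff]
  -- base point
  obtain ⟨c, b0, hc⟩ : ∃ c : ZMod ℓ, ∃ b, v c = Sum.inr b := by
    obtain ⟨e, he, i, -, h⟩ := hwin 0
    obtain ⟨j, -, hj⟩ := (h i).1 rfl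
    exact ⟨_, _, hj⟩
  let w : ℕ → A ⊕ Fin n := fun k => v (c + (k : ℕ))
  have hweq : ∀ a b, w a = w b ↔ a ≡ b [MOD ℓ] := by
    intro a b
    rw [← ZMod.natCast_eq_natCast_iff]
    exact ⟨fun h => add_left_cancel (hv h), fun h => by simp only [w, h]⟩
  have hwin' : ∀ k : ℕ, ∃ e ∈ H, ∃ i : Fin n,
      (∀ a, a ∈ e ↔ ∃ j < r, w (k + j) = Sum.inl a) ∧
      (∀ b, b = i ↔ ∃ j < r, w (k + j) = Sum.inr b) := by
    intro k
    have := hwin (c + (k : ℕ))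
    simpa only [w, Nat.cast_add, add_assoc] using this
  have hP : ∀ k, (∃ b, w k = Sum.inr b) ↔ r ∣ k := by
    apply cone_pattern r hr
    · exact ⟨b0, by simpa [w] using hc⟩
    · intro k
      obtain ⟨e, he, i, -, h⟩ := hwin' k
      obtain ⟨j, hj, hj'⟩ := (h i).1 rfl
      exact ⟨j, hj, _, hj'⟩
    · rintro k j hj j' hj' ⟨b, hb⟩ ⟨b', hb'⟩
      obtain ⟨e, he, i, -, h⟩ := hwin' k
      have e1 := (h b).2 ⟨j, hj, hb⟩
      have e2 := (h b').2 ⟨j', hj', hb'⟩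
      have h3 : w (k + j) = w (k + j') := by rw [hb, hb', e1, e2]
      have h4 := Nat.ModEq.add_left_cancel' k ((hweq _ _).1 h3)
      exact Nat.ModEq.eq_of_lt_of_lt h4 (by omega) (by omega)
  obtain ⟨m, rfl⟩ : r ∣ ℓ := by
    rw [← hP]
    refine ⟨b0, ?_⟩
    rw [(hweq ℓ 0).2 (by simp [Nat.ModEq])]
    simpa [w] using hc
  have hm : 2 ≤ m := by
    by_contra h
    have : m ≤ 1 := by omega
    nlinarith
  obtain ⟨s, rfl⟩ : ∃ s, r = s + 1 := ⟨r - 1, by omega⟩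
  simp only [Nat.add_sub_cancel]
  have hs : 0 < s := by omega
  let idx : ℕ → ℕ := fun k => (s + 1) * (k / s) + k % s + 1
  have hidx : ∀ q t, t < s → idx (s * q + t) = (s + 1) * q + t + 1 := by
    intro q t ht
    simp only [idx]
    rw [Nat.mul_add_div hs, Nat.mul_add_mod, Nat.div_eq_of_lt ht, Nat.mod_eq_of_lt ht, add_zero]
  have hdec : ∀ k, ∃ q t, t < s ∧ k = s * q + t := fun k =>
    ⟨k / s, k % s, Nat.mod_lt _ hs, (Nat.div_add_mod k s).symm⟩
  have hleft : ∀ k, ∃ a, w (idx k) = Sum.inl a := by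
    intro k
    obtain ⟨q, t, ht, rfl⟩ := hdec k
    rcases h : w (idx (s * q + t)) with a | b
    · exact ⟨a, rfl⟩
    · exfalso
      have := (hP _).1 ⟨b, h⟩
      rw [hidx q t ht, add_assoc, Nat.dvd_add_right (Dvd.intro _ rfl)] at this
      exact absurd (Nat.le_of_dvd (by omega) this) (by omega)
  choose u hu using hleft
  have hsm : s < s * m := by nlinarith
  haveI : NeZero (s * m) := ⟨by omega⟩
  have hper : ∀ k, u (k % (s * m)) = u k := by
    intro k
    apply Sum.inl_injective (β := Fin n)
    rw [← hu, ← hu, hweq]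
    have h1 := Nat.div_add_mod k (s * m)
    obtain ⟨q, t, ht, h2⟩ := hdec (k % (s * m))
    have h3 : k = s * (m * (k / (s * m)) + q) + t := by
      rw [h2] at h1
      rw [mul_add, ← mul_assoc, add_assoc, h1]
    rw [h2, hidx q t ht]
    generalize k / (s * m) = d at h3
    rw [h3, hidx _ t ht]
    have : (s + 1) * (m * d + q) + t + 1 = (s + 1) * q + t + 1 + ((s + 1) * m) * d := by ring
    rw [this]
    simp [Nat.ModEq]
  refine ⟨s * m, hsm, fun x => u x.val, ?_, ?_⟩
  · intro x y hxy
    have h1 : w (idx x.val) = w (idx y.val) := by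
      rw [hu, hu]; exact congrArg _ hxy
    rw [hweq] at h1
    have hlt : ∀ z : ZMod (s * m), idx z.val < (s + 1) * m := by
      intro z
      have h := ZMod.val_lt z
      obtain ⟨q, t, ht, h2⟩ := hdec z.val
      rw [h2] at h ⊢
      rw [hidx q t ht]
      have : q < m := by
        by_contra hq
        have := Nat.mul_le_mul_left s (not_lt.1 hq)
        omega
      have := Nat.mul_le_mul_left (s + 1) (Nat.succ_le_of_lt this)
      rw [Nat.mul_succ] at this
      omega
    have h2 := Nat.ModEq.eq_of_lt_of_lt h1 (hlt x) (hlt y)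
    apply ZMod.val_injective
    obtain ⟨q, t, ht, h3⟩ := hdec x.val
    obtain ⟨q', t', ht', h3'⟩ := hdec y.val
    rw [h3, h3', hidx q t ht, hidx q' t' ht'] at h2
    have hqq : q = q' := by
      rcases lt_trichotomy q q' with h | h | h
      · have := Nat.mul_le_mul_left (s + 1) (Nat.succ_le_of_lt h)
        rw [Nat.mul_succ] at this
        omega
      · exact h
      · have := Nat.mul_le_mul_left (s + 1) (Nat.succ_le_of_lt h)
        rw [Nat.mul_succ] at this
        omega
    subst hqq
    rw [h3, h3']
    omega
  · intro x
    obtain ⟨q, t, ht, h3⟩ := hdec x.val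
    obtain ⟨e, he, i, h, -⟩ := hwin' ((s + 1) * q + t + 1)
    have hx : ∀ j : ℕ, u (x + (j : ZMod (s * m))).val = u (s * q + t + j) := by
      intro j
      rw [ZMod.val_add, ZMod.val_natCast, Nat.add_mod_mod, hper, h3]
    have hi1 : ∀ j, t + j < s → idx (s * q + t + j) = (s + 1) * q + t + 1 + j := by
      intro j hj
      rw [add_assoc, hidx q (t + j) hj]; ring
    have hi2 : ∀ j, j < s → s ≤ t + j →
        idx (s * q + t + j) = (s + 1) * q + t + 1 + (j + 1) := by
      intro j hj hj'
      have : s * q + t + j = s * (q + 1) + (t + j - s) := by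
        rw [Nat.mul_succ]; omega
      rw [this, hidx _ _ (by omega), Nat.mul_succ]
      omega
    have : tightWindow s (fun x : ZMod (s * m) => u x.val) x = e := by
      ext a
      rw [h]
      simp only [tightWindow, Finset.mem_image, Finset.mem_univ, true_and, hx, Fin.exists_iff]
      constructor
      · rintro ⟨j, hj, hja⟩
        have hja' : w (idx (s * q + t + j)) = Sum.inl a := by rw [hu, hja]
        by_cases hts : t + j < s
        · exact ⟨j, by omega, by rw [← hi1 j hts]; exact hja'⟩
        · exact ⟨j + 1, by omega, by rw [← hi2 j hj (by omega)]; exact hja'⟩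
      · rintro ⟨j, hj, hja⟩
        rcases lt_trichotomy (t + j) s with hts | hts | hts
        · refine ⟨j, by omega, ?_⟩
          rw [← hi1 j hts, hu] at hja
          exact Sum.inl_injective hja
        · exfalso
          have : (s + 1) * q + t + 1 + j = (s + 1) * (q + 1) := by
            rw [Nat.mul_succ]; omega
          obtain ⟨b, hb⟩ := (hP ((s + 1) * q + t + 1 + j)).2 (this ▸ Dvd.intro _ rfl)
          rw [hb] at hja
          cases hja
        · obtain ⟨j, rfl⟩ : ∃ j', j = j' + 1 := ⟨j - 1, by omega⟩
          refine ⟨j, by omega, ?_⟩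
          rw [← hi2 j (by omega) (by omega), hu] at hja
          exact Sum.inl_injective hja
    rw [this]
    exact he

/-- Adding a new vertex from `[n]` in all possible ways to each edge of an
`(r-1)`-uniform tight-cycle-free hypergraph `H` on `n` vertices yields an
`r`-uniform tight-cycle-free hypergraph with `n * |E(H)|` edges. -/
theorem cone_construction_tightCycleFree {A : Type*} [DecidableEq A] [Fintype A]
    (r n : ℕ) (hr : 4 ≤ r) (hA : Fintype.card A = n)
    (H : Finset (Finset A)) (hunif : ∀ e ∈ H, e.card = r - 1)
    (hfree : TightCycleFree (r - 1) (H : Set (Finset A))) :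
    TightCycleFree r
      ((Finset.image
          (fun p : Finset A × Fin n =>
            p.1.image Sum.inl ∪ {Sum.inr p.2})
          (H ×ˢ (Finset.univ : Finset (Fin n)))
        : Finset (Finset (A ⊕ Fin n))) : Set (Finset (A ⊕ Fin n))) ∧
    (Finset.image
        (fun p : Finset A × Fin n => p.1.image Sum.inl ∪ {Sum.inr p.2})
        (H ×ˢ (Finset.univ : Finset (Fin n)))).card = n * H.card := by
  constructor
  · apply cone_free r n hr H hfree
    intro f hf
    simp only [Finset.coe_image, Set.mem_image, Finset.mem_coe, Finset.mem_product,
      Finset.mem_univ, and_true] at hf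
    obtain ⟨p, hp, rfl⟩ := hf
    exact ⟨p.1, hp, p.2, rfl⟩
  · rw [Finset.card_image_of_injective, Finset.card_product, Finset.card_univ, Fintype.card_fin,
      mul_comm]
    rintro ⟨e, i⟩ ⟨e', i'⟩ h
    simp only at h
    have h1 : ∀ a, a ∈ e ↔ a ∈ e' := by
      intro a
      have := Finset.ext_iff.1 h (Sum.inl a)
      simpa using this
    have h2 : i = i' := by
      have := Finset.ext_iff.1 h (Sum.inr i)
      simpa using this
    rw [Finset.ext h1, h2]
end
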